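/- Let P ⊂ ℝⁿ be a pointed polyhedron and let g ∈ ℝⁿ \ {0}. Then g is an edge direction of P if and only if for every m ∈ ℕ, every pointed polyhedron Q ⊆ ℝᵐ equipped with an irredundant description, and every linear map π : ℝᵐ → ℝⁿ with π(Q) = P, one has g ∈ π(C(Q)). -/

import Mathlib

open Matrix

noncomputable section

/-- The polyhedron `{x : Ax = b, Bx ≤ d}`. -/
def polySet {p q n : Type*} [Fintype n] (A : Matrix p n ℝ) (b : p → ℝ)
    (B : Matrix q n ℝ) (d : q → ℝ) : Set (n → ℝ) :=
  {x | A.mulVec x = b ∧ B.mulVec x ≤ d}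

/-- The circuits of the linear description `Ax = b, Bx ≤ d`: nonzero kernel elements `g` of `A`
whose support of `Bg` is inclusion-minimal among nonzero kernel elements. -/
def circuits {p q n : Type*} [Fintype n] (A : Matrix p n ℝ) (B : Matrix q n ℝ) :
    Set (n → ℝ) :=
  {g | A.mulVec g = 0 ∧ g ≠ 0 ∧
    ∀ y : n → ℝ, A.mulVec y = 0 → y ≠ 0 →
      {i | B.mulVec y i ≠ 0} ⊆ {i | B.mulVec g i ≠ 0} →
      {i | B.mulVec g i ≠ 0} ⊆ {i | B.mulVec y i ≠ 0}}

/-- A face of a polyhedron `P`: either `P` itself or the set of maximizers of a linear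
functional over `P` whose supremum is finite and attained. -/
def IsFace {n : Type*} [Fintype n] (P F : Set (n → ℝ)) : Prop :=
  F = P ∨ ∃ (c : n → ℝ) (s : ℝ),
    (∀ y ∈ P, c ⬝ᵥ y ≤ s) ∧ (∃ y ∈ P, c ⬝ᵥ y = s) ∧ F = {x ∈ P | c ⬝ᵥ x = s}

/-- The dimension of the affine span of a set. -/
def spanDim {n : Type*} [Fintype n] (S : Set (n → ℝ)) : ℕ :=
  Module.finrank ℝ (affineSpan ℝ S).direction

def IsVertex {n : Type*} [Fintype n] (P : Set (n → ℝ)) (v : n → ℝ) : Prop :=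
  IsFace P {v}

def IsEdge {n : Type*} [Fintype n] (P F : Set (n → ℝ)) : Prop :=
  IsFace P F ∧ spanDim F = 1

/-- A nonzero vector lying in the direction space of the affine span of some edge of `P`. -/
def IsEdgeDirection {n : Type*} [Fintype n] (P : Set (n → ℝ)) (g : n → ℝ) : Prop :=
  g ≠ 0 ∧ ∃ F, IsEdge P F ∧ g ∈ (affineSpan ℝ F).direction

/-- A facet: a face whose affine span has dimension `dim P - 1`. -/
def IsFacet {n : Type*} [Fintype n] (P F : Set (n → ℝ)) : Prop :=
  IsFace P F ∧ spanDim F + 1 = spanDim P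

/-- A pointed set: contains no affine line. -/
def PointedSet {n : Type*} [Fintype n] (P : Set (n → ℝ)) : Prop :=
  ∀ x v : n → ℝ, (∀ t : ℝ, x + t • v ∈ P) → v = 0

/-- `Ax = b, Bx ≤ d` is an irredundant description of `P`. -/
def Irredundant {p q n : Type*} [Fintype n] (A : Matrix p n ℝ) (b : p → ℝ)
    (B : Matrix q n ℝ) (d : q → ℝ) (P : Set (n → ℝ)) : Prop :=
  P = polySet A b B d ∧
  {x | A.mulVec x = b} = (affineSpan ℝ P : Set (n → ℝ)) ∧
  ∀ i, IsFacet P {x ∈ P | B.mulVec x i = d i}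

/-- A basic solution of the system `Ax = b, Bx ≤ d`: satisfies the equalities, and the rows of
`A` together with the tight rows of `B` span the whole space. -/
def IsBasicSolution {p q n : Type*} [Fintype n] (A : Matrix p n ℝ) (b : p → ℝ)
    (B : Matrix q n ℝ) (d : q → ℝ) (g : n → ℝ) : Prop :=
  A.mulVec g = b ∧
  Submodule.span ℝ (Set.range (fun i => A i) ∪
    (fun i => B i) '' {i | B.mulVec g i = d i}) = ⊤

/-!
Let `π(Q) = P`, and let `X`, `Y` be lifts to `Q` of two points of an edge of `P`. Among the vectors
of `ker A` that are sign compatible with `X - Y` and not killed by `π`, those of minimal support are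
circuits. A suitable multiple `w` of such a circuit can be moved from `X` to `Y` inside `Q`; since
`π (X - w) + π (Y + w) = π X + π Y`, the face property keeps `π (Y + w)` on the edge, so `π w` is a
nonzero multiple of the edge direction.

Conversely, suppose that `g` is not an edge direction, and write `P = conv V + cone R`. Whenever a
minimal face of `P` or of its recession cone is parallel to `g`, it has a direction `k` outside
`ℝ ∙ g` along which one can perturb. So a ray `r` parallel to `g` is the mean of two rays `r ± εk`
that are not. The points of `V` on a line of direction `g` lie between two of them, `u` and `w`, and
the segment from `u` to `w` is the diagonal of a parallelogram in `P` whose other vertices are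
`(u + w) / 2 ± εk` and whose sides are not parallel to `g`. A parallelogram is an affine image of
the product of two segments. Glueing these products and the rays gives a standard form polyhedron,
each of whose circuits maps to a multiple of a ray, of a side, or of the difference of vertices of
two different parallelograms, hence never to `g`.
-/

section Conformal

variable {q : Type*}

/-- Sign conformality: every nonzero entry of `a` has the sign of the corresponding entry of `c`,
which is then nonzero as well. -/
def Conforms (a c : q → ℝ) : Prop := ∀ i, a i ≠ 0 → 0 < a i * c i

lemma Conforms.refl (a : q → ℝ) : Conforms a a := fun _ hi => mul_self_pos.2 hi

lemma Conforms.trans {a c e : q → ℝ} (hac : Conforms a c) (hce : Conforms c e) :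
    Conforms a e := by
  intro i hi
  have hpos := hac i hi
  have hci : c i ≠ 0 := right_ne_zero_of_mul hpos.ne'
  have hprod : 0 < (c i * c i) * (a i * e i) := by
    linarith [mul_pos hpos (hce i hci)]
  exact (mul_pos_iff_of_pos_left (mul_self_pos.2 hci)).1 hprod

lemma Conforms.smul {a c : q → ℝ} (h : Conforms a c) {t : ℝ} (ht : 0 < t) :
    Conforms (t • a) c := by
  intro i hi
  rw [Pi.smul_apply, smul_eq_mul] at hi ⊢
  rw [mul_assoc]
  exact mul_pos ht (h i (right_ne_zero_of_mul hi))

lemma Conforms.nonneg_mul {a c : q → ℝ} (h : Conforms a c) (i : q) : 0 ≤ a i * c i := by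
  rcases eq_or_ne (a i) 0 with hi | hi
  · simp [hi]
  · exact (h i hi).le

lemma Conforms.le_max_zero {a c : q → ℝ} (h : Conforms a c) (h' : Conforms (c - a) c) (i : q) :
    a i ≤ max 0 (c i) := by
  by_contra! hlt
  obtain ⟨hpos, hlt⟩ := max_lt_iff.1 hlt
  have hc : 0 < c i := (mul_pos_iff_of_pos_left hpos).1 (h i hpos.ne')
  have := h'.nonneg_mul i
  rw [Pi.sub_apply] at this
  nlinarith

/-- The multiple `t` is the least ratio `a i / y i` over the coordinates where `y` and `a` have
the same sign. -/
lemma exists_conforms_sub_smul [Finite q] {a y : q → ℝ} (hsupp : y.support ⊆ a.support)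
    (hpos : ∃ i, 0 < y i * a i) :
    ∃ t : ℝ, 0 < t ∧ Conforms (a - t • y) a ∧ (a - t • y).support ⊂ a.support := by
  have := Fintype.ofFinite q
  obtain ⟨i, hi, hmin⟩ := Set.exists_min_image {i | 0 < y i * a i} (fun i => a i / y i)
    (Set.toFinite _) hpos
  have hyi : y i ≠ 0 := left_ne_zero_of_mul (ne_of_gt hi)
  have hai : a i ≠ 0 := right_ne_zero_of_mul (ne_of_gt hi)
  have ht : 0 < a i / y i := by
    rw [← mul_div_mul_left _ _ hyi]
    exact div_pos hi (mul_self_pos.2 hyi)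
  set t := a i / y i
  have hsub : (a - t • y).support ⊆ a.support := by
    intro j hj haj
    have hyj : y j = 0 := by_contra fun h => hsupp h haj
    exact hj (by simp [haj, hyj])
  have hnonneg : ∀ j, 0 ≤ (a - t • y) j * a j := by
    intro j
    simp only [Pi.sub_apply, Pi.smul_apply, smul_eq_mul]
    rcases lt_or_ge 0 (y j * a j) with hj | hj
    · have hle : t * (y j * a j) ≤ a j / y j * (y j * a j) :=
        mul_le_mul_of_nonneg_right (hmin j hj) hj.le
      have hratio : a j / y j * (y j * a j) = a j * a j := by
        field_simp [left_ne_zero_of_mul hj.ne']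
      linarith
    · linarith [mul_self_nonneg (a j), mul_nonneg ht.le (neg_nonneg.2 hj)]
  refine ⟨t, ht, fun j hj => (hnonneg j).lt_of_ne' (mul_ne_zero hj (hsub hj)),
    (Set.ssubset_iff_of_subset hsub).2 ⟨i, hai, ?_⟩⟩
  simp [t, hyi]

end Conformal

section Circuits

variable {p q n : Type*} [Fintype n] {A : Matrix p n ℝ} {b : p → ℝ} {B : Matrix q n ℝ} {d : q → ℝ}

lemma PointedSet.eq_zero_of_mulVec_eq_zero (hP : PointedSet (polySet A b B d))
    (hne : (polySet A b B d).Nonempty) {k : n → ℝ} (hA : A *ᵥ k = 0) (hB : B *ᵥ k = 0) :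
    k = 0 := by
  obtain ⟨x, hxA, hxB⟩ := hne
  refine hP x k fun t => ⟨?_, ?_⟩
  · rw [mulVec_add, mulVec_smul, hA, smul_zero, add_zero, hxA]
  · rwa [mulVec_add, mulVec_smul, hB, smul_zero, add_zero]

lemma smul_mem_circuits {z : n → ℝ} (hz : z ∈ circuits A B) {c : ℝ} (hc : c ≠ 0) :
    c • z ∈ circuits A B := by
  obtain ⟨hA, hz0, hmin⟩ := hz
  have hsupp : {i | (B *ᵥ (c • z)) i ≠ 0} = {i | (B *ᵥ z) i ≠ 0} := by
    ext i
    simp [mulVec_smul, hc]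
  refine ⟨by rw [mulVec_smul, hA, smul_zero], smul_ne_zero hc hz0, ?_⟩
  rwa [hsupp]

lemma mem_span_singleton_of_mem_circuits
    (hAB : ∀ k, A *ᵥ k = 0 → B *ᵥ k = 0 → k = 0) {z y : n → ℝ} (hz : z ∈ circuits A B)
    (hy : A *ᵥ y = 0) (hy0 : y ≠ 0) (hs : (B *ᵥ y).support ⊆ (B *ᵥ z).support) :
    z ∈ ℝ ∙ y := by
  obtain ⟨i, hi⟩ : ∃ i, (B *ᵥ y) i ≠ 0 := Function.ne_iff.1 fun h => hy0 (hAB y hy h)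
  set c := (B *ᵥ z) i / (B *ᵥ y) i with hc
  have hBw : B *ᵥ (z - c • y) = B *ᵥ z - c • B *ᵥ y := by rw [mulVec_sub, mulVec_smul]
  have hwi : (B *ᵥ (z - c • y)) i = 0 := by
    rw [hBw, Pi.sub_apply, Pi.smul_apply, smul_eq_mul, hc, div_mul_cancel₀ _ hi, sub_self]
  suffices hw : z - c • y = 0 from
    Submodule.mem_span_singleton.2 ⟨c, (sub_eq_zero.1 hw).symm⟩
  by_contra hw
  refine hz.2.2 _ (by rw [mulVec_sub, mulVec_smul, hz.1, hy]; simp) hw (fun j hj hzj => ?_)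
    (hs hi) hwi
  have hyj : (B *ᵥ y) j = 0 := by_contra fun h => hs h hzj
  exact hj (by simp [hBw, hzj, hyj])

variable [Finite q]

lemma map_eq_zero_of_forall_conforms {E : Type*} [AddCommGroup E] [Module ℝ E]
    {f : (n → ℝ) →ₗ[ℝ] E} {w : n → ℝ} (hw : A *ᵥ w = 0)
    (hf : ∀ v, A *ᵥ v = 0 → Conforms (B *ᵥ v) (B *ᵥ w) →
      (B *ᵥ v).support ⊂ (B *ᵥ w).support → f v = 0)
    {y : n → ℝ} (hy : A *ᵥ y = 0) (hlt : (B *ᵥ y).support ⊂ (B *ᵥ w).support)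
    (hpos : ∃ i, 0 < (B *ᵥ y) i * (B *ᵥ w) i) : f w = 0 := by
  have hmap : ∀ v, A *ᵥ v = 0 → (B *ᵥ v).support ⊆ (B *ᵥ w).support →
      (∃ i, 0 < (B *ᵥ v) i * (B *ᵥ w) i) → ∃ t : ℝ, 0 < t ∧ f w = t • f v := by
    intro v hv hsupp hpos
    obtain ⟨t, ht, hconf, hlt⟩ := exists_conforms_sub_smul hsupp hpos
    rw [← mulVec_smul, ← mulVec_sub] at hconf hlt
    have := hf _ (by rw [mulVec_sub, mulVec_smul, hw, hv]; simp) hconf hlt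
    exact ⟨t, ht, by rwa [map_sub, map_smul, sub_eq_zero] at this⟩
  obtain ⟨t, ht, hft⟩ := hmap y hy hlt.1 hpos
  suffices hfy : f y = 0 by rw [hft, hfy, smul_zero]
  by_cases hconf : Conforms (B *ᵥ y) (B *ᵥ w)
  · exact hf y hy hconf hlt
  · obtain ⟨j, hj, hjw⟩ : ∃ j, (B *ᵥ y) j ≠ 0 ∧ (B *ᵥ y) j * (B *ᵥ w) j ≤ 0 := by
      simpa [Conforms] using hconf
    have hneg := hjw.lt_of_ne (mul_ne_zero hj (hlt.1 hj))
    obtain ⟨s, hs, hfs⟩ := hmap (-y) (by rw [mulVec_neg, hy, neg_zero])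
      (by rw [mulVec_neg, Function.support_neg]; exact hlt.1)
      ⟨j, by simpa [mulVec_neg] using hneg⟩
    have hsum : (t + s) • f y = 0 := by
      rw [add_smul, ← hft, hfs, map_neg, smul_neg, neg_add_cancel]
    exact (smul_eq_zero.1 hsum).resolve_left (ne_of_gt (add_pos ht hs))

/-- Among the kernel vectors conforming to `u` which `f` does not kill, those of minimal support
are circuits. -/
lemma exists_mem_circuits_conforms_map_ne_zero {E : Type*} [AddCommGroup E] [Module ℝ E]
    (hAB : ∀ k, A *ᵥ k = 0 → B *ᵥ k = 0 → k = 0) (f : (n → ℝ) →ₗ[ℝ] E) {u : n → ℝ}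
    (hu : A *ᵥ u = 0) (hfu : f u ≠ 0) :
    ∃ w ∈ circuits A B, Conforms (B *ᵥ w) (B *ᵥ u) ∧ f w ≠ 0 := by
  obtain ⟨w, ⟨hw, hwu, hfw⟩, hmin⟩ := exists_minimalFor_of_wellFoundedLT
    (fun w => A *ᵥ w = 0 ∧ Conforms (B *ᵥ w) (B *ᵥ u) ∧ f w ≠ 0)
    (fun w => (B *ᵥ w).support) ⟨u, hu, .refl _, hfu⟩
  refine ⟨w, ⟨hw, by rintro rfl; simp at hfw, fun y hy hy0 hsub => ?_⟩, hwu, hfw⟩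
  by_contra hnot
  have hmap : ∀ v, A *ᵥ v = 0 → (B *ᵥ v).support ⊂ (B *ᵥ w).support →
      ¬ ∃ i, 0 < (B *ᵥ v) i * (B *ᵥ w) i := fun v hv hlt hpos =>
    hfw <| map_eq_zero_of_forall_conforms hw (fun x hx hxw hlt => by_contra fun hfx =>
      hlt.2 (hmin ⟨hx, hxw.trans hwu, hfx⟩ hlt.1)) hv hlt hpos
  obtain ⟨i, hi⟩ : ∃ i, (B *ᵥ y) i ≠ 0 := Function.ne_iff.1 fun h => hy0 (hAB y hy h)
  rcases (mul_ne_zero hi (hsub hi)).lt_or_gt with hneg | hpos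
  · refine hmap (-y) (by rw [mulVec_neg, hy, neg_zero]) ?_ ⟨i, by simpa [mulVec_neg] using hneg⟩
    rw [mulVec_neg, Function.support_neg]
    exact ⟨hsub, hnot⟩
  · exact hmap y hy ⟨hsub, hnot⟩ ⟨i, hpos⟩

end Circuits

section Forward

variable {p q n n' : Type*} [Fintype n] [Fintype n']
  {A : Matrix p n ℝ} {b : p → ℝ} {B : Matrix q n ℝ} {d : q → ℝ}

lemma IsFace.subset {P F : Set (n → ℝ)} (hF : IsFace P F) : F ⊆ P := by
  rcases hF with rfl | ⟨c, s, -, -, rfl⟩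
  exacts [subset_rfl, Set.sep_subset _ _]

lemma IsFace.mem_of_add_eq_add {P F : Set (n → ℝ)} (hF : IsFace P F) {x y x' y' : n → ℝ}
    (hx : x ∈ F) (hy : y ∈ F) (hx' : x' ∈ P) (hy' : y' ∈ P) (hsum : x' + y' = x + y) :
    x' ∈ F := by
  rcases hF with rfl | ⟨c, s, hle, -, rfl⟩
  · exact hx'
  · have hdot : c ⬝ᵥ x' + c ⬝ᵥ y' = c ⬝ᵥ x + c ⬝ᵥ y := by
      rw [← dotProduct_add, ← dotProduct_add, hsum]
    exact ⟨hx', by linarith [hx.2, hy.2, hle _ hx', hle _ hy']⟩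

lemma add_mem_polySet_of_conforms {X Y v : n → ℝ} (hX : X ∈ polySet A b B d)
    (hY : Y ∈ polySet A b B d) (hv : A *ᵥ v = 0) (hconf : Conforms (B *ᵥ v) (B *ᵥ (X - Y)))
    (hconf' : Conforms (B *ᵥ (X - Y) - B *ᵥ v) (B *ᵥ (X - Y))) :
    Y + v ∈ polySet A b B d := by
  refine ⟨by rw [mulVec_add, hY.1, hv, add_zero], fun i => ?_⟩
  have hle := hconf.le_max_zero hconf' i
  rw [mulVec_sub, Pi.sub_apply] at hle
  rw [mulVec_add, Pi.add_apply]
  have hXi := hX.2 i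
  have hYi := hY.2 i
  rcases le_max_iff.1 hle with h | h <;> linarith

lemma exists_mem_circuits_add_mem_sub_mem [Finite q] {E : Type*} [AddCommGroup E] [Module ℝ E]
    (hpt : PointedSet (polySet A b B d)) (f : (n → ℝ) →ₗ[ℝ] E) {X Y : n → ℝ}
    (hX : X ∈ polySet A b B d) (hY : Y ∈ polySet A b B d) (hf : f X ≠ f Y) :
    ∃ w ∈ circuits A B, f w ≠ 0 ∧ Y + w ∈ polySet A b B d ∧ X - w ∈ polySet A b B d := by
  obtain ⟨w, hw, hconf, hfw⟩ := exists_mem_circuits_conforms_map_ne_zero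
    (fun k => hpt.eq_zero_of_mulVec_eq_zero ⟨X, hX⟩) f (u := X - Y)
    (by rw [mulVec_sub, hX.1, hY.1, sub_self]) (by rwa [map_sub, sub_ne_zero])
  obtain ⟨i, hi⟩ : ∃ i, (B *ᵥ w) i ≠ 0 := Function.ne_iff.1 fun h =>
    hw.2.1 (hpt.eq_zero_of_mulVec_eq_zero ⟨X, hX⟩ hw.1 h)
  obtain ⟨t, ht, hconf', -⟩ := exists_conforms_sub_smul
    (fun i hi => right_ne_zero_of_mul (hconf i hi).ne') ⟨i, hconf i hi⟩
  rw [← mulVec_smul] at hconf'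
  have hker : A *ᵥ (t • w) = 0 := by rw [mulVec_smul, hw.1, smul_zero]
  have hconf_t : Conforms (B *ᵥ (t • w)) (B *ᵥ (X - Y)) := by
    rw [mulVec_smul]
    exact hconf.smul ht
  refine ⟨t • w, smul_mem_circuits hw ht.ne', ?_,
    add_mem_polySet_of_conforms hX hY hker hconf_t hconf', ?_⟩
  · rw [map_smul]
    exact smul_ne_zero ht.ne' hfw
  · rw [show X - t • w = Y + (X - Y - t • w) by abel]
    refine add_mem_polySet_of_conforms hX hY ?_ ?_ ?_ <;> rw [mulVec_sub _ (X - Y)]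
    · rw [hker, mulVec_sub, hX.1, hY.1, sub_self, sub_self]
    · exact hconf'
    · rwa [sub_sub_cancel]

lemma IsEdge.exists_ne_direction_eq_span {P F : Set (n → ℝ)} (hF : IsEdge P F) {g : n → ℝ}
    (hg : g ≠ 0) (hgF : g ∈ (affineSpan ℝ F).direction) :
    (affineSpan ℝ F).direction = ℝ ∙ g ∧ ∃ x ∈ F, ∃ y ∈ F, x ≠ y := by
  constructor
  · refine (Submodule.eq_of_le_of_finrank_eq ?_ ?_).symm
    · rwa [Submodule.span_singleton_le_iff_mem]
    · rw [finrank_span_singleton hg]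
      exact hF.2.symm
  · by_contra! hsub
    rw [direction_affineSpan, vectorSpan_of_subsingleton ℝ fun x hx y hy => hsub x hx y hy] at hgF
    exact hg ((Submodule.mem_bot ℝ).1 hgF)

lemma mem_image_circuits_of_isEdgeDirection [Finite q] {P : Set (n' → ℝ)} {g : n' → ℝ}
    (hg : IsEdgeDirection P g) {f : (n → ℝ) →ₗ[ℝ] (n' → ℝ)} (hpt : PointedSet (polySet A b B d))
    (him : f '' polySet A b B d = P) : g ∈ f '' circuits A B := by
  obtain ⟨hg0, F, hF, hgF⟩ := hg
  obtain ⟨hspan, x, hx, y, hy, hxy⟩ := hF.exists_ne_direction_eq_span hg0 hgF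
  obtain ⟨X, hX, rfl⟩ := him.ge (hF.1.subset hx)
  obtain ⟨Y, hY, rfl⟩ := him.ge (hF.1.subset hy)
  obtain ⟨w, hw, hfw, hYw, hXw⟩ := exists_mem_circuits_add_mem_sub_mem hpt f hX hY hxy
  have hmem : f (Y + w) ∈ F :=
    hF.1.mem_of_add_eq_add hx hy (him.le ⟨_, hYw, rfl⟩) (him.le ⟨_, hXw, rfl⟩)
      (by rw [map_add, map_sub]; abel)
  have hdir : f w ∈ (affineSpan ℝ F).direction := by
    simpa using AffineSubspace.vsub_mem_direction (subset_affineSpan ℝ F hmem)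
      (subset_affineSpan ℝ F hy)
  obtain ⟨c, hc⟩ := Submodule.mem_span_singleton.1 (hspan.le hdir)
  have hc0 : c ≠ 0 := by
    rintro rfl
    exact hfw (by rw [← hc, zero_smul])
  exact ⟨c⁻¹ • w, smul_mem_circuits hw (inv_ne_zero hc0),
    by rw [map_smul, ← hc, inv_smul_smul₀ hc0]⟩

end Forward

section Faces

open Filter Topology

variable {p q n : Type*} [Fintype n]
  {A : Matrix p n ℝ} {b : p → ℝ} {B : Matrix q n ℝ} {d : q → ℝ} {x : n → ℝ}

/-- The linear space parallel to the smallest face of `Ax = b, Bx ≤ d` containing `x`: the kernel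
of `A` and of all the rows of `B` that are tight at `x`. -/
def faceDirection (A : Matrix p n ℝ) (B : Matrix q n ℝ) (d : q → ℝ) (x : n → ℝ) :
    Submodule ℝ (n → ℝ) where
  carrier := {w | A *ᵥ w = 0 ∧ ∀ i, (B *ᵥ x) i = d i → (B *ᵥ w) i = 0}
  zero_mem' := by simp
  add_mem' hv hw := ⟨by rw [mulVec_add, hv.1, hw.1, add_zero], fun i hi => by
    rw [mulVec_add, Pi.add_apply, hv.2 i hi, hw.2 i hi, add_zero]⟩
  smul_mem' c w hw := ⟨by rw [mulVec_smul, hw.1, smul_zero], fun i hi => by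
    rw [mulVec_smul, Pi.smul_apply, hw.2 i hi, smul_zero]⟩

lemma mem_faceDirection {w : n → ℝ} :
    w ∈ faceDirection A B d x ↔ A *ᵥ w = 0 ∧ ∀ i, (B *ᵥ x) i = d i → (B *ᵥ w) i = 0 :=
  Iff.rfl

/-- The smallest face of `Ax = b, Bx ≤ d` containing its point `x`. -/
def minimalFace (A : Matrix p n ℝ) (b : p → ℝ) (B : Matrix q n ℝ) (d : q → ℝ) (x : n → ℝ) :
    Set (n → ℝ) :=
  {y ∈ polySet A b B d | ∀ i, (B *ᵥ x) i = d i → (B *ᵥ y) i = d i}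

lemma isFace_minimalFace [Finite q] (hx : x ∈ polySet A b B d) :
    IsFace (polySet A b B d) (minimalFace A b B d x) := by
  have := Fintype.ofFinite q
  classical
  set T := Finset.univ.filter fun i => (B *ᵥ x) i = d i with hT
  have hdot : ∀ y, (∑ i ∈ T, B i) ⬝ᵥ y = ∑ i ∈ T, (B *ᵥ y) i := fun y => sum_dotProduct ..
  refine Or.inr ⟨∑ i ∈ T, B i, ∑ i ∈ T, d i, fun y hy => ?_, ⟨x, hx, ?_⟩, ?_⟩
  · rw [hdot]
    exact Finset.sum_le_sum fun i _ => hy.2 i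
  · rw [hdot]
    exact Finset.sum_congr rfl fun i hi => (Finset.mem_filter.1 hi).2
  · refine Set.ext fun y => and_congr_right fun hy => ?_
    rw [hdot, Finset.sum_eq_sum_iff_of_le fun i _ => hy.2 i]
    simp [hT]

lemma finrank_faceDirection_add_one {x₀ : n → ℝ} {i : q} (hA : A *ᵥ x₀ = A *ᵥ x)
    (hx₀ : ∀ j, (B *ᵥ x₀) j ≠ d j) (hx : ∀ j, (B *ᵥ x) j = d j ↔ j = i) :
    Module.finrank ℝ (faceDirection A B d x) + 1
      = Module.finrank ℝ (faceDirection A B d x₀) := by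
  set φ : Module.Dual ℝ (faceDirection A B d x₀) :=
    (LinearMap.proj i ∘ₗ B.mulVecLin).domRestrict _ with hφ
  have hmem : x₀ - x ∈ faceDirection A B d x₀ :=
    ⟨by rw [mulVec_sub, hA, sub_self], fun j hj => absurd hj (hx₀ j)⟩
  have hφ0 : φ ≠ 0 := by
    intro h
    have hval : (B *ᵥ (x₀ - x)) i = 0 := LinearMap.congr_fun h ⟨_, hmem⟩
    rw [mulVec_sub, Pi.sub_apply, sub_eq_zero, (hx i).2 rfl] at hval
    exact hx₀ i hval
  have hker : (LinearMap.ker φ).map (Submodule.subtype _) = faceDirection A B d x := by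
    ext w
    simp [hφ, mem_faceDirection, hx, hx₀, and_comm]
  rw [← hker, Submodule.finrank_map_subtype_eq, Module.Dual.finrank_ker_add_one_of_ne_zero hφ0]

variable [Finite q]

lemma eventually_add_smul_mem_polySet (hx : x ∈ polySet A b B d) {k : n → ℝ}
    (hk : k ∈ faceDirection A B d x) : ∀ᶠ ε : ℝ in 𝓝 0, x + ε • k ∈ polySet A b B d := by
  have hB : ∀ i, ∀ᶠ ε : ℝ in 𝓝 0, (B *ᵥ (x + ε • k)) i ≤ d i := by
    intro i
    have heq : ∀ ε : ℝ, (B *ᵥ (x + ε • k)) i = (B *ᵥ x) i + ε * (B *ᵥ k) i := fun ε => by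
      rw [mulVec_add, mulVec_smul, Pi.add_apply, Pi.smul_apply, smul_eq_mul]
    simp only [heq]
    rcases (hx.2 i).eq_or_lt with htight | hlt
    · exact .of_forall fun ε => by rw [hk.2 i htight, mul_zero, add_zero, htight]
    · have hcont : Continuous fun ε : ℝ => (B *ᵥ x) i + ε * (B *ᵥ k) i := by fun_prop
      exact ((hcont.tendsto' 0 _ (by simp)).eventually_lt_const hlt).mono fun _ => le_of_lt
  filter_upwards [eventually_all.2 hB] with ε hε
  exact ⟨by rw [mulVec_add, mulVec_smul, hx.1, hk.1, smul_zero, add_zero], hε⟩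

lemma direction_affineSpan_minimalFace (hx : x ∈ polySet A b B d) :
    (affineSpan ℝ (minimalFace A b B d x)).direction = faceDirection A B d x := by
  have hxF : x ∈ minimalFace A b B d x := ⟨hx, fun _ => id⟩
  apply le_antisymm
  · rw [direction_affineSpan, vectorSpan_def, Submodule.span_le]
    rintro _ ⟨y, hy, z, hz, rfl⟩
    refine ⟨by simp [mulVec_sub, hy.1.1, hz.1.1], fun i hi => ?_⟩
    simp [mulVec_sub, hy.2 i hi, hz.2 i hi]
  · intro w hw
    obtain ⟨ε, hε, hε0⟩ : ∃ ε : ℝ, x + ε • w ∈ polySet A b B d ∧ ε ≠ 0 :=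
      (((eventually_add_smul_mem_polySet hx hw).filter_mono nhdsWithin_le_nhds).and
        eventually_mem_nhdsWithin).exists (f := 𝓝[≠] 0)
    have hεF : x + ε • w ∈ minimalFace A b B d x := by
      refine ⟨hε, fun i hi => ?_⟩
      simp [mulVec_add, mulVec_smul, hw.2 i hi, hi]
    have hdir := AffineSubspace.vsub_mem_direction (subset_affineSpan ℝ _ hεF)
      (subset_affineSpan ℝ _ hxF)
    rw [vsub_eq_sub, add_sub_cancel_left] at hdir
    exact (Submodule.smul_mem_iff _ hε0).1 hdir

lemma exists_mem_faceDirection_notMem_span {g : n → ℝ} (hg : g ≠ 0)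
    (hedge : ¬ IsEdgeDirection (polySet A b B d) g) (hx : x ∈ polySet A b B d)
    (hgx : g ∈ faceDirection A B d x) : ∃ k ∈ faceDirection A B d x, k ∉ ℝ ∙ g := by
  by_contra! hle
  have hspan : faceDirection A B d x = ℝ ∙ g :=
    le_antisymm hle ((Submodule.span_singleton_le_iff_mem _ _).2 hgx)
  have hdir := direction_affineSpan_minimalFace hx
  refine hedge ⟨hg, minimalFace A b B d x, ⟨isFace_minimalFace hx, ?_⟩, by rwa [hdir]⟩
  rw [spanDim, hdir, hspan, finrank_span_singleton hg]

lemma irredundant_of_strict_points {x₀ : n → ℝ} (hx₀ : A *ᵥ x₀ = b)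
    (hx₀' : ∀ i, (B *ᵥ x₀) i < d i)
    (hrow : ∀ i, ∃ x, A *ᵥ x = b ∧ (B *ᵥ x) i = d i ∧ ∀ j, j ≠ i → (B *ᵥ x) j < d j) :
    Irredundant A b B d (polySet A b B d) := by
  have hx₀P : x₀ ∈ polySet A b B d := ⟨hx₀, fun i => (hx₀' i).le⟩
  have hface₀ : minimalFace A b B d x₀ = polySet A b B d :=
    Set.sep_eq_self_iff_mem_true.2 fun y _ i hi => absurd hi (hx₀' i).ne
  have hdir₀ := direction_affineSpan_minimalFace hx₀P
  rw [hface₀] at hdir₀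
  refine ⟨rfl, Set.ext fun y => ?_, fun i => ?_⟩
  · rw [SetLike.mem_coe, ← AffineSubspace.vsub_right_mem_direction_iff_mem
      (subset_affineSpan ℝ _ hx₀P), hdir₀, mem_faceDirection]
    simp [mulVec_sub, hx₀, sub_eq_zero, (hx₀' _).ne]
  · obtain ⟨x, hxA, hxi, hxj⟩ := hrow i
    have htight : ∀ j, (B *ᵥ x) j = d j ↔ j = i := fun j =>
      ⟨fun h => by_contra fun hj => (hxj j hj).ne h, by rintro rfl; exact hxi⟩
    have hxP : x ∈ polySet A b B d :=
      ⟨hxA, fun j => (eq_or_ne j i).elim (fun h => ((htight j).2 h).le) fun h => (hxj j h).le⟩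
    have hface : {y ∈ polySet A b B d | (B *ᵥ y) i = d i} = minimalFace A b B d x := by
      simp [minimalFace, htight]
    rw [hface]
    refine ⟨isFace_minimalFace hxP, ?_⟩
    rw [spanDim, spanDim, direction_affineSpan_minimalFace hxP, hdir₀]
    exact finrank_faceDirection_add_one (hx₀.trans hxA.symm) (fun j => (hx₀' j).ne) htight

end Faces

section Recession

open Filter Topology

variable {p q n : Type*} [Fintype n] [Finite q]
  {A : Matrix p n ℝ} {b : p → ℝ} {B : Matrix q n ℝ} {d : q → ℝ}

lemma exists_mem_polySet_slack_support_ssubset {x k : n → ℝ} (hx : x ∈ polySet A b B d)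
    (hk : k ∈ faceDirection A B d x) (hpos : ∃ i, 0 < (B *ᵥ k) i) :
    ∃ y ∈ polySet A b B d, (d - B *ᵥ y).support ⊂ (d - B *ᵥ x).support := by
  have hslack : 0 ≤ d - B *ᵥ x := sub_nonneg.2 hx.2
  have hsupp : (B *ᵥ k).support ⊆ (d - B *ᵥ x).support := fun i hi hdx =>
    hi (hk.2 i (sub_eq_zero.1 hdx).symm)
  obtain ⟨i, hi⟩ := hpos
  obtain ⟨t, -, hconf, hlt⟩ := exists_conforms_sub_smul hsupp
    ⟨i, mul_pos hi ((hslack i).lt_of_ne' (hsupp hi.ne'))⟩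
  have hsub : d - B *ᵥ x - t • B *ᵥ k = d - B *ᵥ (x + t • k) := by
    rw [mulVec_add, mulVec_smul, sub_sub]
  rw [hsub] at hconf hlt
  refine ⟨x + t • k, ⟨?_, sub_nonneg.1 fun i => ?_⟩, hlt⟩
  · rw [mulVec_add, mulVec_smul, hx.1, hk.1, smul_zero, add_zero]
  · rcases eq_or_ne ((d - B *ᵥ (x + t • k)) i) 0 with h0 | h0
    · exact h0.ge
    · exact (pos_of_mul_pos_left (hconf i h0) (hslack i)).le

lemma exists_mem_polySet_faceDirection_le (hne : (polySet A b B d).Nonempty) :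
    ∃ x ∈ polySet A b B d, ∀ k ∈ faceDirection A B d x, B *ᵥ k = 0 := by
  obtain ⟨x, hx, hmin⟩ := exists_minimalFor_of_wellFoundedLT (· ∈ polySet A b B d)
    (fun x => (d - B *ᵥ x).support) hne
  refine ⟨x, hx, fun k hk => ?_⟩
  have hnonpos : ∀ k ∈ faceDirection A B d x, B *ᵥ k ≤ 0 := by
    intro k hk
    by_contra hk0
    obtain ⟨y, hy, hlt⟩ := exists_mem_polySet_slack_support_ssubset hx hk
      (by simpa [Pi.le_def] using hk0)
    exact hlt.2 (hmin hy hlt.1)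
  refine le_antisymm (hnonpos k hk) ?_
  simpa [mulVec_neg] using hnonpos (-k) (neg_mem hk)

/-- Go far in the direction `r` from a point on a minimal face of the subsystem of the rows
vanishing on `r`. -/
lemma exists_faceDirection_eq_of_recession (hne : (polySet A b B d).Nonempty) {r : n → ℝ}
    (hr : r ∈ polySet A 0 B 0) :
    ∃ x ∈ polySet A b B d, faceDirection A B d x = faceDirection A B 0 r := by
  set B' : Matrix {i // (B *ᵥ r) i = 0} n ℝ := B.submatrix (↑) id
  obtain ⟨x, ⟨hxA, hxB⟩, hmin⟩ := exists_mem_polySet_faceDirection_le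
    (A := A) (b := b) (B := B') (d := fun i => d i) (hne.mono fun x hx => ⟨hx.1, fun i => hx.2 i⟩)
  have hval : ∀ (t : ℝ) i, (B *ᵥ (x + t • r)) i = (B *ᵥ x) i + t * (B *ᵥ r) i := fun t i => by
    rw [mulVec_add, mulVec_smul, Pi.add_apply, Pi.smul_apply, smul_eq_mul]
  have hfar : ∀ i, ∀ᶠ t : ℝ in atTop, (B *ᵥ r) i ≠ 0 → (B *ᵥ (x + t • r)) i < d i := by
    intro i
    by_cases hi : (B *ᵥ r) i = 0
    · exact .of_forall fun _ h => absurd hi h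
    · have hlim : Tendsto (fun t : ℝ => (B *ᵥ x) i + t * (B *ᵥ r) i) atTop atBot :=
        tendsto_atBot_add_const_left _ _
          (tendsto_id.atTop_mul_const_of_neg ((hr.2 i).lt_of_ne hi))
      filter_upwards [hlim.eventually_lt_atBot (d i)] with t ht _
      rwa [hval]
  obtain ⟨t, ht⟩ := (eventually_all.2 hfar).exists
  have hvanish : ∀ i, (B *ᵥ r) i = 0 → (B *ᵥ (x + t • r)) i = (B *ᵥ x) i := fun i hi => by
    rw [hval, hi, mul_zero, add_zero]
  refine ⟨x + t • r, ⟨?_, fun i => ?_⟩, le_antisymm ?_ ?_⟩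
  · rw [mulVec_add, mulVec_smul, hxA, hr.1, smul_zero, add_zero]
  · by_cases hi : (B *ᵥ r) i = 0
    · exact (hvanish i hi).trans_le (hxB ⟨i, hi⟩)
    · exact (ht i hi).le
  · refine fun w hw => ⟨hw.1, fun i hi => ?_⟩
    exact congr_fun (hmin w ⟨hw.1, fun j hj => hw.2 j ((hvanish j j.2).trans hj)⟩) ⟨i, hi⟩
  · exact fun w hw => ⟨hw.1, fun i hi => hw.2 i (by_contra fun h => (ht i h).ne hi)⟩

end Recession

section Perturbation

open Filter Topology

lemma mem_span_singleton_symm {K E : Type*} [DivisionRing K] [AddCommGroup E] [Module K E]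
    {g s : E} (hg : g ≠ 0) (h : g ∈ K ∙ s) : s ∈ K ∙ g := by
  simpa using mem_span_insert_exchange (s := ∅) (by simpa using h) (by simpa using hg)

lemma notMem_span_add_smul {K E : Type*} [DivisionRing K] [AddCommGroup E] [Module K E]
    {g s k : E} (hg : g ≠ 0) (hs : s ∈ K ∙ g) (hk : k ∉ K ∙ g) {ε : K} (hε : ε ≠ 0) :
    g ∉ K ∙ (s + ε • k) := fun hmem =>
  hk <| (Submodule.smul_mem_iff _ hε).1 <|
    (Submodule.add_mem_iff_right _ hs).1 (mem_span_singleton_symm hg hmem)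

variable {p q n : Type*} [Fintype n]
  {A : Matrix p n ℝ} {b : p → ℝ} {B : Matrix q n ℝ} {d : q → ℝ}

lemma sub_mem_faceDirection_midpoint {u w : n → ℝ} (hu : u ∈ polySet A b B d)
    (hw : w ∈ polySet A b B d) : u - w ∈ faceDirection A B d (midpoint ℝ u w) := by
  refine ⟨by rw [mulVec_sub, hu.1, hw.1, sub_self], fun i hi => ?_⟩
  rw [midpoint_eq_smul_add, mulVec_smul, mulVec_add, Pi.smul_apply, Pi.add_apply, smul_eq_mul,
    invOf_eq_inv] at hi
  rw [mulVec_sub, Pi.sub_apply]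
  linarith [hu.2 i, hw.2 i]

lemma convex_polySet (A : Matrix p n ℝ) (b : p → ℝ) (B : Matrix q n ℝ) (d : q → ℝ) :
    Convex ℝ (polySet A b B d) :=
  ((convex_singleton b).linear_preimage A.mulVecLin).inter
    ((convex_Iic d).linear_preimage B.mulVecLin)

variable [Finite q] {g : n → ℝ}

lemma exists_eventually_perturbation (hg : g ≠ 0) {x s : n → ℝ} (hx : x ∈ polySet A b B d)
    (hgs : g ∈ ℝ ∙ s → ∃ k ∈ faceDirection A B d x, k ∉ ℝ ∙ g) :
    ∃ k : n → ℝ, ∀ᶠ ε : ℝ in 𝓝[≠] 0, x + ε • k ∈ polySet A b B d ∧ x - ε • k ∈ polySet A b B d ∧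
      g ∉ ℝ ∙ (s + ε • k) ∧ g ∉ ℝ ∙ (s - ε • k) := by
  by_cases hmem : g ∈ ℝ ∙ s
  · obtain ⟨k, hk, hkg⟩ := hgs hmem
    have hs := mem_span_singleton_symm hg hmem
    have hadd := eventually_add_smul_mem_polySet hx hk
    have hsub := eventually_add_smul_mem_polySet hx (neg_mem hk)
    refine ⟨k, ?_⟩
    filter_upwards [nhdsWithin_le_nhds hadd, nhdsWithin_le_nhds hsub, self_mem_nhdsWithin]
      with ε hε hε' hε0
    rw [smul_neg, ← sub_eq_add_neg] at hε'
    refine ⟨hε, hε', notMem_span_add_smul hg hs hkg hε0, ?_⟩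
    rw [sub_eq_add_neg, ← neg_smul]
    exact notMem_span_add_smul hg hs hkg (neg_ne_zero.2 hε0)
  · exact ⟨0, .of_forall fun ε => by simpa using ⟨hx, hmem⟩⟩

lemma exists_perturbation_of_recession (hg : g ≠ 0)
    (hedge : ¬ IsEdgeDirection (polySet A b B d) g) (hne : (polySet A b B d).Nonempty)
    {r : n → ℝ} (hr : r ∈ polySet A 0 B 0) :
    ∃ h : n → ℝ, r + h ∈ polySet A 0 B 0 ∧ r - h ∈ polySet A 0 B 0 ∧
      g ∉ ℝ ∙ (r + h) ∧ g ∉ ℝ ∙ (r - h) := by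
  obtain ⟨k, hk⟩ := exists_eventually_perturbation hg hr (s := r) (fun hgr => by
    obtain ⟨x, hx, hdir⟩ := exists_faceDirection_eq_of_recession hne hr
    rw [← hdir]
    refine exists_mem_faceDirection_notMem_span hg hedge hx ?_
    have hrr : r ∈ faceDirection A B d x := by
      rw [hdir]
      exact ⟨hr.1, fun _ => id⟩
    exact (Submodule.span_singleton_le_iff_mem _ _).2 hrr hgr)
  obtain ⟨ε, hε⟩ := hk.exists
  exact ⟨ε • k, hε⟩

lemma exists_eventually_perturbation_midpoint (hg : g ≠ 0)
    (hedge : ¬ IsEdgeDirection (polySet A b B d) g) {u w : n → ℝ} (hu : u ∈ polySet A b B d)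
    (hw : w ∈ polySet A b B d) :
    ∃ k : n → ℝ, ∀ᶠ ε : ℝ in 𝓝[≠] 0, midpoint ℝ u w + ε • k ∈ polySet A b B d ∧
      midpoint ℝ u w - ε • k ∈ polySet A b B d ∧
      g ∉ ℝ ∙ ((2⁻¹ : ℝ) • (u - w) + ε • k) ∧ g ∉ ℝ ∙ ((2⁻¹ : ℝ) • (u - w) - ε • k) := by
  have hmid := (convex_polySet A b B d).midpoint_mem hu hw
  refine exists_eventually_perturbation hg hmid fun hgs =>
    exists_mem_faceDirection_notMem_span hg hedge hmid ?_
  have hmem := Submodule.smul_mem _ (2⁻¹ : ℝ) (sub_mem_faceDirection_midpoint hu hw)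
  exact (Submodule.span_singleton_le_iff_mem _ _).2 hmem hgs

end Perturbation

section MinkowskiWeyl

open PointedCone

variable {E : Type*} [AddCommGroup E] [Module ℝ E]

lemma eq_zero_or_map_neg_of_mem_hull {φ : Module.Dual ℝ E} {s : Set E} (hs : ∀ v ∈ s, φ v < 0)
    {x : E} (hx : x ∈ hull ℝ s) : x = 0 ∨ φ x < 0 := by
  induction hx using Submodule.span_induction with
  | mem v hv => exact .inr (hs v hv)
  | zero => exact .inl rfl
  | add x y _ _ hx hy =>
    rcases hx with rfl | hx
    · rwa [zero_add]
    · rcases hy with rfl | hy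
      · exact .inr (by rwa [add_zero])
      · exact .inr (by rw [map_add]; exact add_neg hx hy)
  | smul c x _ hx =>
    rcases eq_or_ne c 0 with rfl | hc
    · exact .inl (zero_smul _ x)
    · refine hx.imp (fun h => by rw [h, smul_zero]) fun h => ?_
      rw [LinearMap.map_smul_of_tower]
      exact smul_neg_of_pos_of_neg (pos_of_ne_zero hc) h

lemma smul_sub_smul_mem_hull_image2 (φ : Module.Dual ℝ E) {s t : Set E} {x y : E}
    (hx : x ∈ hull ℝ s) (hy : y ∈ hull ℝ t) :
    φ x • y - φ y • x ∈ hull ℝ (Set.image2 (fun v w => φ v • w - φ w • v) s t) := by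
  have hle : ∀ v ∈ s, hull ℝ t ≤ (hull ℝ (Set.image2 (fun v w => φ v • w - φ w • v) s t)).comap
      (φ v • LinearMap.id - φ.smulRight v) := fun v hv =>
    Submodule.span_le.2 fun w hw => subset_hull ⟨v, hv, w, hw, rfl⟩
  have hle' : hull ℝ s ≤ (hull ℝ (Set.image2 (fun v w => φ v • w - φ w • v) s t)).comap
      (φ.smulRight y - φ y • LinearMap.id) :=
    Submodule.span_le.2 fun v hv => hle v hv hy
  exact hle' hx

lemma mem_hull_union_image2_of_nonneg {φ : Module.Dual ℝ E} {s t : Set E}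
    (ht : ∀ w ∈ t, φ w < 0) {x : E} (hx : x ∈ hull ℝ (s ∪ t)) (hφx : 0 ≤ φ x) :
    x ∈ hull ℝ (s ∪ Set.image2 (fun v w => φ v • w - φ w • v) s t) := by
  set T := s ∪ Set.image2 (fun v w => φ v • w - φ w • v) s t
  rw [hull, Submodule.span_union] at hx
  obtain ⟨y, hy, z, hz, rfl⟩ := Submodule.mem_sup.1 hx
  have hyT : y ∈ hull ℝ T := Submodule.span_mono Set.subset_union_left hy
  rcases eq_zero_or_map_neg_of_mem_hull ht hz with rfl | hφz
  · rwa [add_zero]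
  · rw [map_add] at hφx
    have hcomb : φ y • z - φ z • y ∈ hull ℝ T :=
      Submodule.span_mono Set.subset_union_right (smul_sub_smul_mem_hull_image2 φ hy hz)
    refine (PointedCone.smul_mem_iff _ (show 0 < φ y by linarith)).1 ?_
    rw [show φ y • (y + z) = (φ y + φ z) • y + (φ y • z - φ z • y) by module]
    exact add_mem (smul_mem _ hφx hyT) hcomb

/-- Fourier–Motzkin elimination: the new generators are the old ones on which `φ` is nonnegative
and, for each pair of generators of opposite signs, their combination killed by `φ`. -/
lemma fg_inf_dual_singleton {C : PointedCone ℝ E} (hC : C.FG) (φ : Module.Dual ℝ E) :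
    (C ⊓ dual .id {φ}).FG := by
  obtain ⟨s, hs, rfl⟩ := Submodule.fg_def.1 hC
  set P := {v ∈ s | 0 ≤ φ v}
  set N := {v ∈ s | φ v < 0}
  have hsPN : s = P ∪ N := by
    ext v
    simp [P, N, ← and_or_left, le_or_gt]
  have hP : P.Finite := hs.subset (Set.sep_subset _ _)
  have hN : N.Finite := hs.subset (Set.sep_subset _ _)
  refine Submodule.fg_def.2 ⟨P ∪ Set.image2 (fun v w => φ v • w - φ w • v) P N,
    hP.union (hP.image2 _ hN), le_antisymm ?_ fun x hx => ?_⟩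
  · rw [Submodule.span_le]
    rintro _ (hv | ⟨v, hv, w, hw, rfl⟩)
    · exact ⟨subset_hull hv.1, by simpa using hv.2⟩
    · refine ⟨?_, by simp [mul_comm]⟩
      dsimp only
      rw [SetLike.mem_coe, sub_eq_add_neg, ← neg_smul]
      exact add_mem (smul_mem _ hv.2 (subset_hull hw.1))
        (smul_mem _ (neg_nonneg.2 hw.2.le) (subset_hull hv.1))
  · refine mem_hull_union_image2_of_nonneg (fun w hw => hw.2) ?_ (by simpa using hx.2)
    rw [← hsPN]
    exact hx.1

lemma fg_inf_dual {C : PointedCone ℝ E} (hC : C.FG) {s : Set (Module.Dual ℝ E)}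
    (hs : s.Finite) : (C ⊓ dual .id s).FG := by
  induction s, hs using Set.Finite.induction_on with
  | empty => simpa using hC
  | insert _ _ ih =>
    rw [dual_insert, inf_comm (dual _ _), ← inf_assoc]
    exact fg_inf_dual_singleton ih _

lemma fg_ofSubmodule {S : Submodule ℝ E} (hS : S.FG) : (S : PointedCone ℝ E).FG := by
  have := Module.Finite.iff_fg.2 hS
  exact Module.Finite.iff_fg.1 (inferInstanceAs (Module.Finite _ S))

lemma exists_finite_eq_hull_of_fg {C : PointedCone ℝ (E × ℝ)} (hC : C.FG)
    (hnonneg : ∀ x ∈ C, 0 ≤ x.2) :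
    ∃ V R : Set E, V.Finite ∧ R.Finite ∧ C = hull ℝ ((·, (1 : ℝ)) '' V ∪ (·, (0 : ℝ)) '' R) := by
  obtain ⟨s, hs, rfl⟩ := Submodule.fg_def.1 hC
  refine ⟨(fun v => v.2⁻¹ • v.1) '' {v ∈ s | 0 < v.2}, Prod.fst '' {v ∈ s | v.2 = 0},
    (hs.subset (Set.sep_subset _ _)).image _, (hs.subset (Set.sep_subset _ _)).image _,
    le_antisymm (Submodule.span_le.2 fun v hv => ?_) (Submodule.span_le.2 ?_)⟩
  · rcases (hnonneg v (subset_hull hv)).eq_or_lt with h0 | hpos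
    · exact subset_hull (.inr ⟨v.1, ⟨v, ⟨hv, h0.symm⟩, rfl⟩, Prod.ext rfl h0⟩)
    · have hsmul : v = v.2 • (v.2⁻¹ • v.1, (1 : ℝ)) := by
        simp [smul_smul, hpos.ne']
      rw [hsmul]
      exact smul_mem _ hpos.le (subset_hull (.inl ⟨_, ⟨v, ⟨hv, hpos⟩, rfl⟩, rfl⟩))
  · rintro _ (⟨_, ⟨v, ⟨hv, hpos⟩, rfl⟩, rfl⟩ | ⟨_, ⟨v, ⟨hv, h0⟩, rfl⟩, rfl⟩)
    · have hsmul : (v.2⁻¹ • v.1, (1 : ℝ)) = v.2⁻¹ • v := by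
        simp [Prod.ext_iff, hpos.ne']
      dsimp only
      rw [hsmul]
      exact smul_mem _ (inv_nonneg.2 hpos.le) (subset_hull hv)
    · have hv0 : (v.1, (0 : ℝ)) = v := Prod.ext rfl h0.symm
      dsimp only
      rw [hv0]
      exact subset_hull hv

variable {p q n : Type*} [Fintype n]
  {A : Matrix p n ℝ} {b : p → ℝ} {B : Matrix q n ℝ} {d : q → ℝ}

/-- The homogenization of `Ax = b, Bx ≤ d`: the cone of the pairs `(x, t)` with `Ax = tb`,
`Bx ≤ td` and `0 ≤ t`, whose slice at height `1` is the polyhedron and whose slice at height `0`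
is its recession cone. -/
def homogenization (A : Matrix p n ℝ) (b : p → ℝ) (B : Matrix q n ℝ) (d : q → ℝ) :
    PointedCone ℝ ((n → ℝ) × ℝ) :=
  ofSubmodule (LinearMap.ker
    (A.mulVecLin ∘ₗ LinearMap.fst ℝ _ _ - (LinearMap.snd ℝ _ _).smulRight b)) ⊓
  dual .id (insert (LinearMap.snd ℝ _ _) (Set.range fun i =>
    d i • LinearMap.snd ℝ _ _ - LinearMap.proj i ∘ₗ B.mulVecLin ∘ₗ LinearMap.fst ℝ _ _))

lemma mem_homogenization {x : (n → ℝ) × ℝ} : x ∈ homogenization A b B d ↔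
    A *ᵥ x.1 = x.2 • b ∧ 0 ≤ x.2 ∧ B *ᵥ x.1 ≤ x.2 • d := by
  simp [homogenization, sub_eq_zero, Pi.le_def, mul_comm]

lemma mk_one_mem_homogenization {x : n → ℝ} :
    (x, 1) ∈ homogenization A b B d ↔ x ∈ polySet A b B d := by
  simp [mem_homogenization, polySet]

lemma mk_zero_mem_homogenization {x : n → ℝ} :
    (x, 0) ∈ homogenization A b B d ↔ x ∈ polySet A 0 B 0 := by
  simp [mem_homogenization, polySet]

lemma nonempty_of_homogenization_eq_hull {V R : Set (n → ℝ)}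
    (hVR : homogenization A b B d = hull ℝ ((·, (1 : ℝ)) '' V ∪ (·, (0 : ℝ)) '' R))
    (hne : (polySet A b B d).Nonempty) : V.Nonempty := by
  by_contra hV
  obtain ⟨x, hx⟩ := hne
  rw [Set.not_nonempty_iff_eq_empty.1 hV, Set.image_empty, Set.empty_union] at hVR
  have hle : homogenization A b B d ≤
      ofSubmodule (LinearMap.ker (LinearMap.snd ℝ (n → ℝ) ℝ)) := by
    refine hVR.le.trans (Submodule.span_le.2 ?_)
    rintro _ ⟨r, -, rfl⟩
    exact rfl
  exact one_ne_zero (hle (mk_one_mem_homogenization.2 hx))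

lemma exists_finite_homogenization_eq_hull [Finite q] (A : Matrix p n ℝ) (b : p → ℝ)
    (B : Matrix q n ℝ) (d : q → ℝ) : ∃ V R : Set (n → ℝ), V.Finite ∧ R.Finite ∧
      homogenization A b B d = hull ℝ ((·, (1 : ℝ)) '' V ∪ (·, (0 : ℝ)) '' R) :=
  exists_finite_eq_hull_of_fg
    (fg_inf_dual (fg_ofSubmodule (IsNoetherian.noetherian _)) ((Set.finite_range _).insert _))
    fun _ hx => (mem_homogenization.1 hx).2.1

end MinkowskiWeyl

section StandardForm

variable {ρ ι : Type*} [Fintype ι] [DecidableEq ι] {A : Matrix ρ ι ℝ} {b : ρ → ℝ}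

lemma mem_polySet_standardForm {z : ι → ℝ} :
    z ∈ polySet A b (-1 : Matrix ι ι ℝ) 0 ↔ A *ᵥ z = b ∧ 0 ≤ z := by
  simp [polySet, neg_mulVec]

lemma mem_circuits_standardForm {z : ι → ℝ} : z ∈ circuits A (-1 : Matrix ι ι ℝ) ↔
    A *ᵥ z = 0 ∧ z ≠ 0 ∧ ∀ y, A *ᵥ y = 0 → y ≠ 0 → y.support ⊆ z.support →
      z.support ⊆ y.support := by
  simp [circuits, neg_mulVec, Function.support]

lemma mem_span_singleton_of_mem_circuits_standardForm {z y : ι → ℝ}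
    (hz : z ∈ circuits A (-1 : Matrix ι ι ℝ)) (hy : A *ᵥ y = 0) (hy0 : y ≠ 0)
    (hs : y.support ⊆ z.support) : z ∈ ℝ ∙ y :=
  mem_span_singleton_of_mem_circuits (fun k _ hk => by simpa [neg_mulVec] using hk) hz hy hy0
    (by simpa only [neg_mulVec, one_mulVec, Function.support_neg] using hs)

lemma pointedSet_standardForm : PointedSet (polySet A b (-1 : Matrix ι ι ℝ) 0) := by
  intro z v hv
  by_contra hne
  obtain ⟨i, hi⟩ := Function.ne_iff.1 hne
  have hnonneg := (mem_polySet_standardForm (A := A) (b := b) |>.1 (hv (-(z i + 1) / v i))).2 i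
  rw [Pi.add_apply, Pi.smul_apply, smul_eq_mul, div_mul_cancel₀ _ hi, Pi.zero_apply] at hnonneg
  linarith

lemma irredundant_standardForm {z₀ : ι → ℝ} (hz₀ : A *ᵥ z₀ = b) (hpos : ∀ i, 0 < z₀ i)
    (hker : ∀ i, ∃ y : ι → ℝ, A *ᵥ y = 0 ∧ 0 < y i ∧ ∀ j, j ≠ i → y j ≤ 0) :
    Irredundant A b (-1 : Matrix ι ι ℝ) 0 (polySet A b (-1 : Matrix ι ι ℝ) 0) := by
  refine irredundant_of_strict_points hz₀ (fun i => by simpa [neg_mulVec] using hpos i)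
    fun i => ?_
  obtain ⟨y, hy, hyi, hyj⟩ := hker i
  refine ⟨z₀ - (z₀ i / y i) • y, ?_, ?_, fun j hj => ?_⟩
  · rw [mulVec_sub, mulVec_smul, hy, smul_zero, sub_zero, hz₀]
  · simp [neg_mulVec, hyi.ne']
  · have hle := mul_nonpos_of_nonneg_of_nonpos (div_pos (hpos i) hyi).le (hyj j hj)
    simp only [neg_mulVec, one_mulVec, Pi.neg_apply, Pi.sub_apply, Pi.smul_apply, smul_eq_mul,
      Pi.zero_apply]
    linarith [hpos j]

end StandardForm

section Universal

/-- `g` is the image of a circuit in every presentation of `P` as the linear image of a pointed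
polyhedron with an irredundant description. -/
def IsUniversalCircuitDirection {E : Type*} [AddCommGroup E] [Module ℝ E] (P : Set E) (g : E) :
    Prop :=
  ∀ (m pQ qQ : ℕ) (AQ : Matrix (Fin pQ) (Fin m) ℝ) (bQ : Fin pQ → ℝ)
    (BQ : Matrix (Fin qQ) (Fin m) ℝ) (dQ : Fin qQ → ℝ)
    (Q : Set (Fin m → ℝ)) (π : (Fin m → ℝ) →ₗ[ℝ] E),
    PointedSet Q → Irredundant AQ bQ BQ dQ Q → (fun x => π x) '' Q = P →
    g ∈ (fun x => π x) '' circuits AQ BQ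

variable {E : Type*} [AddCommGroup E] [Module ℝ E]

lemma not_isUniversalCircuitDirection_empty (g : E) : ¬ IsUniversalCircuitDirection ∅ g := by
  intro h
  set A : Matrix (Fin 1) (Fin 0) ℝ := 0
  set B : Matrix (Fin 0) (Fin 0) ℝ := 0
  have hQ : polySet A 1 B 0 = ∅ := Set.eq_empty_of_forall_notMem fun x hx =>
    zero_ne_one ((zero_mulVec x).symm.trans hx.1)
  have hirr : Irredundant A 1 B 0 ∅ := by
    refine ⟨hQ.symm, ?_, fun i => i.elim0⟩
    rw [AffineSubspace.span_empty, AffineSubspace.bot_coe]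
    exact Set.eq_empty_of_forall_notMem fun x hx => zero_ne_one ((zero_mulVec x).symm.trans hx)
  obtain ⟨z, hz, -⟩ := h 0 1 0 A 1 B 0 ∅ 0 (fun _ _ _ => Subsingleton.elim _ _) hirr (by simp)
  exact hz.2.1 (Subsingleton.elim _ _)

/-- Reindexing passes from the `Fin m`-indexed presentations of `IsUniversalCircuitDirection` to
arbitrary finite index types. -/
lemma IsUniversalCircuitDirection.mem_image_circuits_standardForm {ρ ι : Type*} [Finite ρ]
    [Fintype ι] [DecidableEq ι] {P : Set E} {g : E} (h : IsUniversalCircuitDirection P g)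
    {A : Matrix ρ ι ℝ} {b : ρ → ℝ} {f : (ι → ℝ) →ₗ[ℝ] E} {z₀ : ι → ℝ} (hz₀ : A *ᵥ z₀ = b)
    (hpos : ∀ i, 0 < z₀ i)
    (hker : ∀ i, ∃ y : ι → ℝ, A *ᵥ y = 0 ∧ 0 < y i ∧ ∀ j, j ≠ i → y j ≤ 0)
    (him : f '' polySet A b (-1 : Matrix ι ι ℝ) 0 = P) :
    g ∈ f '' circuits A (-1 : Matrix ι ι ℝ) := by
  have := Fintype.ofFinite ρ
  set N := Fintype.card ι
  set e : ι ≃ Fin N := Fintype.equivFin ι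
  set e' := Fintype.equivFin ρ
  set A' := A.submatrix e'.symm e.symm
  set L : (Fin N → ℝ) ≃ₗ[ℝ] (ι → ℝ) := LinearEquiv.funCongrLeft ℝ ℝ e
  have hA' : ∀ z, A' *ᵥ z = (A *ᵥ L z) ∘ e'.symm := fun z => submatrix_mulVec_equiv A z _ _
  have hA'_iff : ∀ z (c : ρ → ℝ), A' *ᵥ z = c ∘ e'.symm ↔ A *ᵥ L z = c := fun z c => by
    rw [hA', e'.symm.surjective.injective_comp_right.eq_iff]
  set Q := polySet A' (b ∘ e'.symm) (-1 : Matrix (Fin N) (Fin N) ℝ) 0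
  have hmem : ∀ z, z ∈ Q ↔ L z ∈ polySet A b (-1 : Matrix ι ι ℝ) 0 := fun z => by
    rw [mem_polySet_standardForm, mem_polySet_standardForm, hA'_iff]
    exact and_congr_right fun _ => (e.forall_congr_right (q := fun i => 0 ≤ z i)).symm
  have hirr : Irredundant A' (b ∘ e'.symm) (-1 : Matrix (Fin N) (Fin N) ℝ) 0 Q := by
    refine irredundant_standardForm ((hA'_iff (L.symm z₀) b).2 (by rw [L.apply_symm_apply, hz₀]))
      (fun i => hpos (e.symm i)) fun i => ?_
    obtain ⟨y, hy, hyi, hyj⟩ := hker (e.symm i)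
    exact ⟨L.symm y, (hA'_iff (L.symm y) 0).2 (by rw [L.apply_symm_apply, hy]), hyi,
      fun j hj => hyj _ (e.symm.injective.ne hj)⟩
  obtain ⟨z, hz, hzg⟩ := h _ _ _ _ _ _ _ _ (f ∘ₗ L) pointedSet_standardForm hirr (by
    rw [← him, ← L.surjective.image_preimage (polySet A b (-1) _), Set.image_image]
    exact congrArg _ (Set.ext hmem))
  refine ⟨L z, ?_, hzg⟩
  obtain ⟨hAz, hz0, hmin⟩ := mem_circuits_standardForm.1 hz
  refine mem_circuits_standardForm.2 ⟨(hA'_iff z 0).1 hAz, L.map_ne_zero_iff.2 hz0,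
    fun y hy hy0 hyz i hi => ?_⟩
  have := hmin (L.symm y) ((hA'_iff (L.symm y) 0).2 (by rw [L.apply_symm_apply, hy]))
    (L.symm.map_ne_zero_iff.2 hy0) (fun j hj => by simpa [L] using hyz hj) hi
  simpa [L] using this

end Universal

section Blocks

lemma support_single_subset_of_ne_zero {ι : Type*} [DecidableEq ι] {z : ι → ℝ} {i : ι}
    (hi : z i ≠ 0) : Function.support (Pi.single i (1 : ℝ) : ι → ℝ) ⊆ z.support :=
  Pi.support_single_subset.trans (Set.singleton_subset_iff.2 hi)

variable {J K : Type*}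

/-- Block `j` consists of two pairs of coordinates, indexed by `(j, β, σ)` with `β` the pair; this
is the total weight of the pair `β`. -/
def blockWeight (z : J × Bool × Bool ⊕ K → ℝ) (j : J) (β : Bool) : ℝ :=
  z (.inl (j, β, false)) + z (.inl (j, β, true))

lemma exists_ne_zero_of_blockWeight_ne_zero {z : J × Bool × Bool ⊕ K → ℝ} {j : J} {β : Bool}
    (h : blockWeight z j β ≠ 0) : ∃ σ, z (.inl (j, β, σ)) ≠ 0 := by
  by_contra! h0
  exact h (by simp [blockWeight, h0])

lemma exists_ne_zero_and_ne_zero_of_blockWeight_eq_zero {z : J × Bool × Bool ⊕ K → ℝ}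
    (hz : z ≠ 0) (hinr : ∀ k, z (.inr k) = 0) (hweight : ∀ j β, blockWeight z j β = 0) :
    ∃ j β, z (.inl (j, β, false)) ≠ 0 ∧ z (.inl (j, β, true)) ≠ 0 := by
  obtain ⟨j, β, σ, hσ⟩ : ∃ j β σ, z (.inl (j, β, σ)) ≠ 0 := by
    by_contra! h
    refine hz (funext ?_)
    rintro (⟨j, β, σ⟩ | k)
    exacts [h j β σ, hinr k]
  have hneg : z (.inl (j, β, false)) = -z (.inl (j, β, true)) :=
    eq_neg_of_add_eq_zero_left (hweight j β)
  cases σ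
  · exact ⟨j, β, hσ, neg_ne_zero.1 (hneg ▸ hσ)⟩
  · exact ⟨j, β, hneg ▸ neg_ne_zero.2 hσ, hσ⟩

/-- The point of block `j` with one unit of weight at `σ` in the first pair and at `τ` in the
second. -/
def cornerVec (K : Type*) [DecidableEq J] [DecidableEq K] (j : J) (σ τ : Bool) :
    J × Bool × Bool ⊕ K → ℝ :=
  Pi.single (.inl (j, false, σ)) 1 + Pi.single (.inl (j, true, τ)) 1

lemma exists_support_cornerVec_subset [DecidableEq J] [DecidableEq K]
    {z : J × Bool × Bool ⊕ K → ℝ}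
    (hz : ∀ j, blockWeight z j false = blockWeight z j true) {j : J}
    (h : blockWeight z j false ≠ 0) : ∃ σ τ, (cornerVec K j σ τ).support ⊆ z.support := by
  obtain ⟨σ, hσ⟩ := exists_ne_zero_of_blockWeight_ne_zero h
  obtain ⟨τ, hτ⟩ := exists_ne_zero_of_blockWeight_ne_zero (hz j ▸ h)
  refine ⟨σ, τ, (Function.support_add _ _).trans (Set.union_subset
    (support_single_subset_of_ne_zero hσ) (support_single_subset_of_ne_zero hτ))⟩

/-- The constraint matrix of a presentation glued from blocks `j : J` and rays `k : K`. Row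
`some j` says that both pairs of the block `j` have the same total weight, and row `none` adds up
these weights over `J`. -/
def blockMatrix (J K : Type*) [DecidableEq J] : Matrix (Option J) (J × Bool × Bool ⊕ K) ℝ :=
  Matrix.of fun
    | some l, .inl (j, β, _) => if l = j then (if β then -1 else 1) else 0
    | none, .inl (_, β, _) => if β then 0 else 1
    | _, .inr _ => 0

section Fintype

variable [DecidableEq J] [Fintype J] [Fintype K]

lemma blockMatrix_mulVec_some (z : J × Bool × Bool ⊕ K → ℝ) (j : J) :
    (blockMatrix J K *ᵥ z) (some j) = blockWeight z j false - blockWeight z j true := by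
  simp [mulVec, dotProduct, blockMatrix, blockWeight, Fintype.sum_prod_type,
    Finset.sum_add_distrib, sub_eq_add_neg, add_comm, add_assoc, add_left_comm]

lemma blockMatrix_mulVec_none (z : J × Bool × Bool ⊕ K → ℝ) :
    (blockMatrix J K *ᵥ z) none = ∑ j, blockWeight z j false := by
  simp [mulVec, dotProduct, blockMatrix, blockWeight, Fintype.sum_prod_type, add_comm]

lemma blockMatrix_mulVec_eq_single_iff {z : J × Bool × Bool ⊕ K → ℝ} {t : ℝ} :
    blockMatrix J K *ᵥ z = Pi.single none t ↔
      (∀ j, blockWeight z j false = blockWeight z j true) ∧ ∑ j, blockWeight z j false = t := by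
  simp [funext_iff, Option.forall, blockMatrix_mulVec_some, blockMatrix_mulVec_none, sub_eq_zero,
    and_comm]

lemma blockMatrix_mulVec_eq_zero_iff {z : J × Bool × Bool ⊕ K → ℝ} :
    blockMatrix J K *ᵥ z = 0 ↔
      (∀ j, blockWeight z j false = blockWeight z j true) ∧ ∑ j, blockWeight z j false = 0 := by
  rw [← blockMatrix_mulVec_eq_single_iff, Pi.single_zero]

variable [DecidableEq K]

lemma blockMatrix_mulVec_single_inr (k : K) :
    blockMatrix J K *ᵥ Pi.single (.inr k) 1 = 0 := by
  rw [blockMatrix_mulVec_eq_zero_iff]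
  simp [blockWeight]

lemma blockMatrix_mulVec_single_sub_single (j : J) (β σ τ : Bool) :
    blockMatrix J K *ᵥ (Pi.single (.inl (j, β, σ)) 1 - Pi.single (.inl (j, β, τ)) 1) = 0 := by
  cases β <;> cases σ <;> cases τ <;>
  simp [blockMatrix_mulVec_eq_zero_iff, blockWeight, Pi.single_apply]

lemma blockMatrix_mulVec_cornerVec (j : J) (σ τ : Bool) :
    blockMatrix J K *ᵥ cornerVec K j σ τ = Pi.single none 1 := by
  cases σ <;> cases τ <;>
  simp [blockMatrix_mulVec_eq_single_iff, blockWeight, Pi.single_apply, cornerVec]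

lemma mem_circuits_blockMatrix {z : J × Bool × Bool ⊕ K → ℝ}
    (hz : z ∈ circuits (blockMatrix J K) (-1 : Matrix (J × Bool × Bool ⊕ K) _ ℝ)) :
    (∃ k, z ∈ ℝ ∙ Pi.single (.inr k) (1 : ℝ)) ∨
    (∃ j β, z ∈ ℝ ∙ (Pi.single (.inl (j, β, false)) (1 : ℝ) - Pi.single (.inl (j, β, true)) 1)) ∨
    ∃ j l, j ≠ l ∧ ∃ σ τ σ' τ', z ∈ ℝ ∙ (cornerVec K j σ τ - cornerVec K l σ' τ') := by
  obtain ⟨hbal, hsum⟩ := blockMatrix_mulVec_eq_zero_iff.1 hz.1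
  by_cases hinr : ∃ k, z (.inr k) ≠ 0
  · obtain ⟨k, hk⟩ := hinr
    exact .inl ⟨k, mem_span_singleton_of_mem_circuits_standardForm hz
      (blockMatrix_mulVec_single_inr k) (by simp)
      (support_single_subset_of_ne_zero hk)⟩
  by_cases hweight : ∃ j, blockWeight z j false ≠ 0
  · obtain ⟨j, hj⟩ := hweight
    obtain ⟨l, hlj, hl⟩ : ∃ l, l ≠ j ∧ blockWeight z l false ≠ 0 := by
      by_contra! h
      rw [Fintype.sum_eq_single j h] at hsum
      exact hj hsum
    obtain ⟨σ, τ, hστ⟩ := exists_support_cornerVec_subset hbal hj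
    obtain ⟨σ', τ', hστ'⟩ := exists_support_cornerVec_subset hbal hl
    refine .inr <| .inr ⟨j, l, hlj.symm, σ, τ, σ', τ',
      mem_span_singleton_of_mem_circuits_standardForm hz ?_ ?_
      ((Function.support_sub _ _).trans (Set.union_subset hστ hστ'))⟩
    · rw [mulVec_sub, blockMatrix_mulVec_cornerVec, blockMatrix_mulVec_cornerVec, sub_self]
    · exact Function.ne_iff.2 ⟨.inl (j, false, σ), by simp [cornerVec, hlj.symm]⟩
  · push Not at hinr hweight
    have hweight' : ∀ j β, blockWeight z j β = 0 := fun j β => by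
      cases β
      exacts [hweight j, (hbal j).symm.trans (hweight j)]
    obtain ⟨j, β, hfalse, htrue⟩ :=
      exists_ne_zero_and_ne_zero_of_blockWeight_eq_zero hz.2.1 hinr hweight'
    exact .inr <| .inl ⟨j, β, mem_span_singleton_of_mem_circuits_standardForm hz
      (blockMatrix_mulVec_single_sub_single j β _ _)
      (Function.ne_iff.2 ⟨.inl (j, β, false), by simp⟩)
      ((Function.support_sub _ _).trans (Set.union_subset
        (support_single_subset_of_ne_zero hfalse) (support_single_subset_of_ne_zero htrue)))⟩

end Fintype

variable {E : Type*} [AddCommGroup E] [Module ℝ E] {q : J → Bool → Bool → E} {r : K → E}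

/-- The block `j` is sent to the parallelogram that is the sum of the segments with endpoints
`q j false σ` and `q j true τ`; this is its vertex with indices `σ` and `τ`. -/
def corner (q : J → Bool → Bool → E) (j : J) (σ τ : Bool) : E := q j false σ + q j true τ

section Map

variable [Fintype J] [Fintype K]

/-- The linear map taking the variable `(β, σ)` of block `j` to `q j β σ` and the ray variable `k`
to `r k`. -/
def blockMap (q : J → Bool → Bool → E) (r : K → E) : (J × Bool × Bool ⊕ K → ℝ) →ₗ[ℝ] E :=
  Fintype.linearCombination ℝ (Sum.elim (fun i => q i.1 i.2.1 i.2.2) r)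

lemma blockMap_cornerVec [DecidableEq J] [DecidableEq K] (j : J) (σ τ : Bool) :
    blockMap q r (cornerVec K j σ τ) = corner q j σ τ := by
  simp [blockMap, cornerVec, corner]

lemma notMem_image_circuits_blockMatrix [DecidableEq J] [DecidableEq K] {g : E}
    (hr : ∀ k, g ∉ ℝ ∙ r k) (hq : ∀ j β, g ∉ ℝ ∙ (q j β false - q j β true))
    (hcorner : ∀ j l, j ≠ l → ∀ σ τ σ' τ', g ∉ ℝ ∙ (corner q j σ τ - corner q l σ' τ')) :
    g ∉ blockMap q r '' circuits (blockMatrix J K) (-1 : Matrix (J × Bool × Bool ⊕ K) _ ℝ) := by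
  rintro ⟨z, hz, rfl⟩
  have hmap : ∀ {y}, z ∈ ℝ ∙ y → blockMap q r z ∈ ℝ ∙ blockMap q r y := fun hy => by
    simpa [Submodule.map_span] using Submodule.mem_map_of_mem (f := blockMap q r) hy
  rcases mem_circuits_blockMatrix hz with ⟨k, hk⟩ | ⟨j, β, hj⟩ | ⟨j, l, hjl, σ, τ, σ', τ', hjl'⟩
  · exact hr k (by simpa [blockMap] using hmap hk)
  · exact hq j β (by simpa [blockMap] using hmap hj)
  · exact hcorner j l hjl σ τ σ' τ' (by simpa [blockMap_cornerVec] using hmap hjl')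

end Map

open PointedCone

lemma mk_sum_smul_add_sum_smul_mem {α β : Type*} [Fintype α] [Fintype β]
    {C : PointedCone ℝ (E × ℝ)} {p : α → E} {s : β → E} (hC : ∀ a b, (p a + s b, (1 : ℝ)) ∈ C)
    {u : α → ℝ} {w : β → ℝ} (hu : 0 ≤ u) (hw : 0 ≤ w) (huw : ∑ a, u a = ∑ b, w b) :
    (∑ a, u a • p a + ∑ b, w b • s b, ∑ a, u a) ∈ C := by
  rcases (Finset.sum_nonneg fun a _ => hu a).eq_or_lt with h0 | hpos
  · have hu0 := (Fintype.sum_eq_zero_iff_of_nonneg hu).1 h0.symm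
    have hw0 := (Fintype.sum_eq_zero_iff_of_nonneg hw).1 (huw.symm.trans h0.symm)
    simp [hu0, hw0, ← Prod.zero_eq_mk]
  · have hfst : ∑ a, ∑ b, (u a * w b) • p a = (∑ a, u a) • ∑ a, u a • p a := by
      simp_rw [← Finset.sum_smul, ← Finset.mul_sum, ← huw, Finset.smul_sum, smul_smul, mul_comm]
    have hsnd : ∑ a, ∑ b, (u a * w b) • s b = (∑ a, u a) • ∑ b, w b • s b := by
      simp_rw [mul_smul, ← Finset.smul_sum, ← Finset.sum_smul]
    have hcomb : (∑ a, u a) • (∑ a, u a • p a + ∑ b, w b • s b, ∑ a, u a) =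
        ∑ a, ∑ b, (u a * w b) • (p a + s b, (1 : ℝ)) := by
      simp_rw [Prod.smul_mk, ← prod_mk_sum, smul_add, Finset.sum_add_distrib, hfst, hsnd,
        smul_eq_mul, mul_one, ← Finset.mul_sum, ← huw, ← Finset.sum_mul]
    refine (PointedCone.smul_mem_iff _ hpos).1 ?_
    rw [hcomb]
    exact sum_mem fun a _ => sum_mem fun b _ => smul_mem _ (mul_nonneg (hu a) (hw b)) (hC a b)

/-- The cone over the corners, placed at height `1`, and the rays `r k`, placed at height `0`. -/
def cornerCone (q : J → Bool → Bool → E) (r : K → E) : PointedCone ℝ (E × ℝ) :=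
  hull ℝ (Set.range (fun i : J × Bool × Bool => (corner q i.1 i.2.1 i.2.2, (1 : ℝ))) ∪
    Set.range fun k => (r k, (0 : ℝ)))

lemma mk_corner_mem_cornerCone (j : J) (σ τ : Bool) : (corner q j σ τ, (1 : ℝ)) ∈ cornerCone q r :=
  subset_hull (.inl ⟨(j, σ, τ), rfl⟩)

lemma mk_mem_cornerCone (k : K) : (r k, (0 : ℝ)) ∈ cornerCone q r :=
  subset_hull (.inr ⟨k, rfl⟩)

section Fintype

variable [DecidableEq J] [Fintype J] [Fintype K]

lemma exists_of_mem_cornerCone {x : E × ℝ} (hx : x ∈ cornerCone q r) :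
    ∃ z, 0 ≤ z ∧ blockMatrix J K *ᵥ z = Pi.single none x.2 ∧ blockMap q r z = x.1 := by
  classical
  induction hx using Submodule.span_induction with
  | mem x hx =>
    rcases hx with ⟨⟨j, σ, τ⟩, rfl⟩ | ⟨k, rfl⟩
    · exact ⟨cornerVec K j σ τ, add_nonneg (Pi.single_nonneg.2 zero_le_one)
        (Pi.single_nonneg.2 zero_le_one), blockMatrix_mulVec_cornerVec j σ τ,
        blockMap_cornerVec j σ τ⟩
    · exact ⟨Pi.single (.inr k) 1, Pi.single_nonneg.2 zero_le_one,
        (blockMatrix_mulVec_single_inr k).trans (Pi.single_zero _).symm, by simp [blockMap]⟩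
  | zero => exact ⟨0, le_rfl, by simp, map_zero _⟩
  | add x y _ _ hx hy =>
    obtain ⟨z, hz, hzM, hzx⟩ := hx
    obtain ⟨w, hw, hwM, hwy⟩ := hy
    exact ⟨z + w, add_nonneg hz hw, by rw [mulVec_add, hzM, hwM, ← Pi.single_add]; rfl,
      by rw [map_add, hzx, hwy]; rfl⟩
  | smul c x _ hx =>
    obtain ⟨z, hz, hzM, hzx⟩ := hx
    exact ⟨(c : ℝ) • z, smul_nonneg c.2 hz, by rw [mulVec_smul, hzM, ← Pi.single_smul]; rfl,
      by rw [map_smul, hzx]; rfl⟩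

lemma mk_blockMap_mem_cornerCone {z : J × Bool × Bool ⊕ K → ℝ} (hz : 0 ≤ z) {t : ℝ}
    (hzt : blockMatrix J K *ᵥ z = Pi.single none t) : (blockMap q r z, t) ∈ cornerCone q r := by
  obtain ⟨hbal, rfl⟩ := blockMatrix_mulVec_eq_single_iff.1 hzt
  have hblock : ∀ j, (∑ σ, z (.inl (j, false, σ)) • q j false σ +
      ∑ τ, z (.inl (j, true, τ)) • q j true τ, ∑ σ, z (.inl (j, false, σ))) ∈ cornerCone q r :=
    fun j => mk_sum_smul_add_sum_smul_mem (fun σ τ => mk_corner_mem_cornerCone j σ τ)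
      (fun _ => hz _) (fun _ => hz _) (by simpa [blockWeight, add_comm] using hbal j)
  have hray : ∀ k, z (.inr k) • (r k, (0 : ℝ)) ∈ cornerCone q r := fun k =>
    smul_mem _ (hz _) (mk_mem_cornerCone k)
  convert add_mem (sum_mem (t := Finset.univ) fun j _ => hblock j)
    (sum_mem (t := Finset.univ) fun k _ => hray k) using 1
  simp [blockMap, Fintype.linearCombination_apply, Prod.ext_iff, Prod.fst_sum, Prod.snd_sum,
    blockWeight, Fintype.sum_prod_type, add_comm]

lemma image_blockMap_polySet [DecidableEq K] :
    blockMap q r '' polySet (blockMatrix J K) (Pi.single none 1)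
      (-1 : Matrix (J × Bool × Bool ⊕ K) _ ℝ) 0 = {x | (x, (1 : ℝ)) ∈ cornerCone q r} := by
  ext x
  constructor
  · rintro ⟨z, hz, rfl⟩
    rw [mem_polySet_standardForm] at hz
    exact mk_blockMap_mem_cornerCone hz.2 hz.1
  · intro hx
    obtain ⟨z, hz, hzM, hzx⟩ := exists_of_mem_cornerCone hx
    exact ⟨z, mem_polySet_standardForm.2 ⟨hzM, hz⟩, hzx⟩

lemma exists_pos_blockMatrix_mulVec_eq [Nonempty J] :
    ∃ z, blockMatrix J K *ᵥ z = Pi.single none 1 ∧ ∀ i, 0 < z i := by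
  refine ⟨Sum.elim (fun _ => (2 * Fintype.card J : ℝ)⁻¹) 1, ?_, ?_⟩
  · rw [blockMatrix_mulVec_eq_single_iff]
    refine ⟨fun _ => rfl, ?_⟩
    have hcard : (Fintype.card J : ℝ) ≠ 0 := by simp
    simp only [blockWeight, Sum.elim_inl, Finset.sum_const, Finset.card_univ, nsmul_eq_mul]
    field_simp
    norm_num
  · rintro (_ | _)
    · exact inv_pos.2 (mul_pos two_pos (Nat.cast_pos.2 Fintype.card_pos))
    · exact one_pos

lemma exists_ker_blockMatrix_pos (i : J × Bool × Bool ⊕ K) :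
    ∃ y, blockMatrix J K *ᵥ y = 0 ∧ 0 < y i ∧ ∀ l, l ≠ i → y l ≤ 0 := by
  classical
  rcases i with ⟨j, β, σ⟩ | k
  · refine ⟨_, blockMatrix_mulVec_single_sub_single j β σ (!σ), by simp, fun l hl => ?_⟩
    rw [Pi.sub_apply, Pi.single_eq_of_ne hl, zero_sub, neg_nonpos]
    exact (Pi.single_nonneg.2 zero_le_one : (0 : J × Bool × Bool ⊕ K → ℝ) ≤ _) l
  · exact ⟨_, blockMatrix_mulVec_single_inr k, by simp, fun l hl => (Pi.single_eq_of_ne hl _).le⟩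

end Fintype

lemma not_isUniversalCircuitDirection_of_cornerCone [Finite J] [Nonempty J] [Finite K] {g : E}
    (hr : ∀ k, g ∉ ℝ ∙ r k) (hq : ∀ j β, g ∉ ℝ ∙ (q j β false - q j β true))
    (hcorner : ∀ j l, j ≠ l → ∀ σ τ σ' τ', g ∉ ℝ ∙ (corner q j σ τ - corner q l σ' τ')) :
    ¬ IsUniversalCircuitDirection {x | (x, (1 : ℝ)) ∈ cornerCone q r} g := fun h => by
  classical
  have := Fintype.ofFinite J
  have := Fintype.ofFinite K
  obtain ⟨z₀, hz₀, hpos⟩ := exists_pos_blockMatrix_mulVec_eq (J := J) (K := K)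
  exact notMem_image_circuits_blockMatrix hr hq hcorner <|
    h.mem_image_circuits_standardForm hz₀ hpos exists_ker_blockMatrix_pos image_blockMap_polySet

end Blocks

section Assembly

open Filter Topology

section Collinear

variable {E : Type*} [AddCommGroup E] [Module ℝ E]

lemma exists_forall_mem_segment {S : Set E} (hS : S.Finite) (hne : S.Nonempty) {g : E}
    (hcol : ∀ x ∈ S, ∀ y ∈ S, x - y ∈ ℝ ∙ g) : ∃ u ∈ S, ∃ w ∈ S, ∀ v ∈ S, v ∈ segment ℝ u w := by
  obtain ⟨x₀, hx₀⟩ := hne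
  set line := AffineMap.lineMap (k := ℝ) x₀ (x₀ + g)
  have hcoord : ∀ v, ∃ t : ℝ, v ∈ S → line t = v := fun v => by
    by_cases hv : v ∈ S
    · obtain ⟨t, ht⟩ := Submodule.mem_span_singleton.1 (hcol v hv x₀ hx₀)
      exact ⟨t, fun _ => by simp [line, AffineMap.lineMap_apply, ht]⟩
    · exact ⟨0, fun h => absurd h hv⟩
  choose t ht using hcoord
  obtain ⟨u, hu, hmin⟩ := S.exists_min_image t hS ⟨x₀, hx₀⟩
  obtain ⟨w, hw, hmax⟩ := S.exists_max_image t hS ⟨x₀, hx₀⟩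
  refine ⟨u, hu, w, hw, fun v hv => ?_⟩
  rw [← ht u hu, ← ht w hw, ← image_segment, segment_eq_Icc (hmin w hw)]
  exact ⟨t v, ⟨hmin v hv, hmax v hv⟩, ht v hv⟩

/-- The sides of the parallelogram in which `u` and `w` are opposite vertices and the two other
vertices are `midpoint ℝ u w ± h`. -/
def diagonalSides (u w h : E) : Bool → Bool → E
  | false, false => (2⁻¹ : ℝ) • (u + h)
  | false, true => (2⁻¹ : ℝ) • (w - h)
  | true, false => (2⁻¹ : ℝ) • (u - h)
  | true, true => (2⁻¹ : ℝ) • (w + h)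

variable {J : Type*} {u w h : J → E}

lemma corner_diagonalSides (j : J) (σ τ : Bool) :
    corner (fun j => diagonalSides (u j) (w j) (h j)) j σ τ =
      match σ, τ with
      | false, false => u j
      | false, true => midpoint ℝ (u j) (w j) + h j
      | true, false => midpoint ℝ (u j) (w j) - h j
      | true, true => w j := by
  cases σ <;> cases τ <;> simp only [corner, diagonalSides, midpoint_eq_smul_add, invOf_eq_inv] <;>
  module

lemma diagonalSides_sub (u w h : E) (β : Bool) :
    diagonalSides u w h β false - diagonalSides u w h β true =
      (2⁻¹ : ℝ) • (u - w) + (if β then -1 else 1 : ℝ) • h := by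
  cases β <;> simp only [diagonalSides, Bool.false_eq_true, if_false, if_true] <;> module

lemma corner_diagonalSides_zero_sub_mem {S : Submodule ℝ E} {j : J} (hj : u j - w j ∈ S)
    (σ τ : Bool) : corner (fun j => diagonalSides (u j) (w j) 0) j σ τ - u j ∈ S := by
  have hcorner : corner (fun j => diagonalSides (u j) (w j) 0) j σ τ - u j =
      (if σ then if τ then -1 else -2⁻¹ else if τ then -2⁻¹ else 0 : ℝ) • (u j - w j) := by
    rw [corner_diagonalSides]
    cases σ <;> cases τ <;>
    simp only [midpoint_eq_smul_add, invOf_eq_inv, Bool.false_eq_true, if_false, if_true] <;>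
    module
  rw [hcorner]
  exact S.smul_mem _ hj

lemma eventually_corner_sub_corner_notMem_span [TopologicalSpace E] [IsTopologicalAddGroup E]
    [ContinuousSMul ℝ E] [T2Space E] [Finite J] {g : E} {k : J → E} (hcol : ∀ j, u j - w j ∈ ℝ ∙ g)
    (hsep : ∀ j l, j ≠ l → u j - u l ∉ ℝ ∙ g) :
    ∀ᶠ ε : ℝ in 𝓝 0, ∀ j l, j ≠ l → ∀ σ τ σ' τ',
      corner (fun j => diagonalSides (u j) (w j) (ε • k j)) j σ τ -
        corner (fun j => diagonalSides (u j) (w j) (ε • k j)) l σ' τ' ∉ ℝ ∙ g := by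
  have hcont : ∀ j σ τ,
      Continuous fun ε : ℝ => corner (fun j => diagonalSides (u j) (w j) (ε • k j)) j σ τ := by
    intro j σ τ
    cases σ <;> cases τ <;> simp only [corner, diagonalSides] <;> fun_prop
  simp only [eventually_all]
  intro j l hjl σ τ σ' τ'
  refine ((hcont j σ τ).sub (hcont l σ' τ')).continuousAt.eventually
    ((ℝ ∙ g).closed_of_finiteDimensional.isOpen_compl.mem_nhds fun hmem => hsep j l hjl ?_)
  simp only [Pi.sub_apply, zero_smul] at hmem
  have hj := corner_diagonalSides_zero_sub_mem (hcol j) σ τ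
  have hl := corner_diagonalSides_zero_sub_mem (hcol l) σ' τ'
  convert add_mem (sub_mem hmem hj) hl using 1
  abel

/-- The index `j` is the line of direction `g` through `u j` and `w j`, as a point of the quotient
by `ℝ ∙ g`. -/
lemma exists_segments_cover {V : Set E} (hV : V.Finite) (g : E) :
    ∃ u w : (ℝ ∙ g).mkQ '' V → E, (∀ j, u j ∈ V) ∧ (∀ j, w j ∈ V) ∧ (∀ j, u j - w j ∈ ℝ ∙ g) ∧
      (∀ j l, j ≠ l → u j - u l ∉ ℝ ∙ g) ∧ ∀ v ∈ V, ∃ j, v ∈ segment ℝ (u j) (w j) := by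
  have hclass : ∀ j : (ℝ ∙ g).mkQ '' V, ∃ u ∈ {v ∈ V | (ℝ ∙ g).mkQ v = j},
      ∃ w ∈ {v ∈ V | (ℝ ∙ g).mkQ v = j}, ∀ v ∈ {v ∈ V | (ℝ ∙ g).mkQ v = j},
        v ∈ segment ℝ u w := by
    rintro ⟨_, v, hv, rfl⟩
    exact exists_forall_mem_segment (hV.subset (Set.sep_subset _ _)) ⟨v, hv, rfl⟩ fun x hx y hy =>
      (Submodule.Quotient.eq _).1 (hx.2.trans hy.2.symm)
  choose u hu w hw hseg using hclass
  refine ⟨u, w, fun j => (hu j).1, fun j => (hw j).1,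
    fun j => (Submodule.Quotient.eq _).1 ((hu j).2.trans (hw j).2.symm),
    fun j l hjl hmem => hjl (Subtype.ext ?_), fun v hv => ⟨⟨_, v, hv, rfl⟩, hseg _ v ⟨hv, rfl⟩⟩⟩
  exact (hu j).2.symm.trans (((Submodule.Quotient.eq _).2 hmem).trans (hu l).2)

end Collinear

variable {p q n : Type*} [Fintype n] {g : n → ℝ}
  {A : Matrix p n ℝ} {b : p → ℝ} {B : Matrix q n ℝ} {d : q → ℝ}

open PointedCone in
lemma cornerCone_eq_homogenization {V R : Set (n → ℝ)}
    (hVR : homogenization A b B d = hull ℝ ((·, (1 : ℝ)) '' V ∪ (·, (0 : ℝ)) '' R))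
    {J : Type*} {s : J → Bool → Bool → n → ℝ} (hs : ∀ j σ τ, corner s j σ τ ∈ polySet A b B d)
    (hV : ∀ v ∈ V, ∃ j, v ∈ segment ℝ (corner s j false false) (corner s j true true))
    {h : R → n → ℝ} (hadd : ∀ r : R, r + h r ∈ polySet A 0 B 0)
    (hsub : ∀ r : R, r - h r ∈ polySet A 0 B 0) :
    cornerCone s (fun k : R × Bool => if k.2 then k.1 + h k.1 else k.1 - h k.1) =
      homogenization A b B d := by
  set r' : R × Bool → n → ℝ := fun k => if k.2 then k.1 + h k.1 else k.1 - h k.1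
  have hcorner : ∀ j σ τ, (corner s j σ τ, (1 : ℝ)) ∈ cornerCone s r' := mk_corner_mem_cornerCone
  have hray : ∀ k, (r' k, (0 : ℝ)) ∈ cornerCone s r' := mk_mem_cornerCone
  refine le_antisymm (Submodule.span_le.2 ?_) (hVR.le.trans (Submodule.span_le.2 ?_))
  · rintro _ (⟨⟨j, σ, τ⟩, rfl⟩ | ⟨⟨r, β⟩, rfl⟩)
    · exact mk_one_mem_homogenization.2 (hs j σ τ)
    · refine mk_zero_mem_homogenization.2 ?_
      cases β
      exacts [hsub r, hadd r]
  · rintro _ (⟨v, hv, rfl⟩ | ⟨r, hr, rfl⟩)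
    · obtain ⟨j, a, c, ha, hc, hac, rfl⟩ := hV v hv
      convert add_mem (smul_mem _ ha (hcorner j false false)) (smul_mem _ hc (hcorner j true true))
        using 1
      simp [hac]
    · refine (PointedCone.smul_mem_iff _ (two_pos (α := ℝ))).1 ?_
      convert add_mem (hray (⟨r, hr⟩, true)) (hray (⟨r, hr⟩, false)) using 1
      simp [r', two_smul]

variable [Finite q]

lemma exists_diagonalSides (hg : g ≠ 0) (hedge : ¬ IsEdgeDirection (polySet A b B d) g)
    {J : Type*} [Finite J] {u w : J → n → ℝ} (hu : ∀ j, u j ∈ polySet A b B d)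
    (hw : ∀ j, w j ∈ polySet A b B d) (hcol : ∀ j, u j - w j ∈ ℝ ∙ g)
    (hsep : ∀ j l, j ≠ l → u j - u l ∉ ℝ ∙ g) :
    ∃ s : J → Bool → Bool → n → ℝ,
      (∀ j, corner s j false false = u j ∧ corner s j true true = w j) ∧
      (∀ j σ τ, corner s j σ τ ∈ polySet A b B d) ∧
      (∀ j β, g ∉ ℝ ∙ (s j β false - s j β true)) ∧
      ∀ j l, j ≠ l → ∀ σ τ σ' τ', g ∉ ℝ ∙ (corner s j σ τ - corner s l σ' τ') := by
  choose k hk using fun j => exists_eventually_perturbation_midpoint hg hedge (hu j) (hw j)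
  obtain ⟨ε, hε, hne⟩ := ((eventually_all.2 hk).and
    (nhdsWithin_le_nhds (eventually_corner_sub_corner_notMem_span (k := k) hcol hsep))).exists
  refine ⟨fun j => diagonalSides (u j) (w j) (ε • k j), fun j => ⟨?_, ?_⟩, fun j σ τ => ?_,
    fun j β => ?_, fun j l hjl σ τ σ' τ' hmem => hne j l hjl σ τ σ' τ' ?_⟩
  · rw [corner_diagonalSides]
  · rw [corner_diagonalSides]
  · rw [corner_diagonalSides]
    cases σ <;> cases τ
    exacts [hu j, (hε j).1, (hε j).2.1, hw j]
  · rw [diagonalSides_sub]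
    cases β
    · simpa using (hε j).2.2.1
    · simpa [← sub_eq_add_neg] using (hε j).2.2.2
  · exact mem_span_singleton_symm hg hmem

lemma not_isUniversalCircuitDirection_of_not_isEdgeDirection (hg : g ≠ 0)
    (hedge : ¬ IsEdgeDirection (polySet A b B d) g) (hne : (polySet A b B d).Nonempty) :
    ¬ IsUniversalCircuitDirection (polySet A b B d) g := by
  obtain ⟨V, R, hVfin, hRfin, hVR⟩ := exists_finite_homogenization_eq_hull A b B d
  have hVP : ∀ v ∈ V, v ∈ polySet A b B d := fun v hv =>
    mk_one_mem_homogenization.1 (hVR.ge (PointedCone.subset_hull (.inl ⟨v, hv, rfl⟩)))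
  have hRP : ∀ r ∈ R, r ∈ polySet A 0 B 0 := fun r hr =>
    mk_zero_mem_homogenization.1 (hVR.ge (PointedCone.subset_hull (.inr ⟨r, hr, rfl⟩)))
  obtain ⟨u, w, hu, hw, hcol, hsep, hcover⟩ := exists_segments_cover hVfin g
  have : Finite ((ℝ ∙ g).mkQ '' V) := hVfin.image _
  have : Finite R := hRfin
  have : Nonempty ((ℝ ∙ g).mkQ '' V) :=
    ((nonempty_of_homogenization_eq_hull hVR hne).image _).to_subtype
  obtain ⟨s, hdiag, hsP, hside, hcorner⟩ := exists_diagonalSides hg hedge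
    (fun j => hVP _ (hu j)) (fun j => hVP _ (hw j)) hcol hsep
  choose h hadd hsub hgadd hgsub using fun r : R =>
    exists_perturbation_of_recession hg hedge hne (hRP r r.2)
  have hcone := cornerCone_eq_homogenization hVR hsP
    (by simpa only [(hdiag _).1, (hdiag _).2] using hcover) hadd hsub
  have hP : polySet A b B d = {x | (x, (1 : ℝ)) ∈ homogenization A b B d} :=
    Set.ext fun _ => mk_one_mem_homogenization.symm
  rw [hP, ← hcone]
  refine not_isUniversalCircuitDirection_of_cornerCone ?_ hside hcorner
  rintro ⟨r, _ | _⟩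
  exacts [hgsub r, hgadd r]

end Assembly

theorem stmt_17_general {p q n : Type*} [Fintype n] [Finite q] (A : Matrix p n ℝ) (b : p → ℝ)
    (B : Matrix q n ℝ) (d : q → ℝ) {g : n → ℝ} (hg : g ≠ 0) :
    IsEdgeDirection (polySet A b B d) g ↔ IsUniversalCircuitDirection (polySet A b B d) g := by
  refine ⟨fun hedge m pQ qQ AQ bQ BQ dQ Q π hpt hirr him => ?_, fun huniv => ?_⟩
  · obtain ⟨rfl, -⟩ := hirr
    exact mem_image_circuits_of_isEdgeDirection hedge hpt him
  · rcases (polySet A b B d).eq_empty_or_nonempty with hempty | hne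
    · rw [hempty] at huniv
      exact absurd huniv (not_isUniversalCircuitDirection_empty g)
    · by_contra hedge
      exact not_isUniversalCircuitDirection_of_not_isEdgeDirection hg hedge hne huniv

/-- For a pointed polyhedron `P` and a nonzero vector `g`, `g` is an edge
direction of `P` iff `g ∈ π(C(Q))` for every pointed polyhedron `Q` with an irredundant
description and every linear `π` with `π(Q) = P`. -/
theorem stmt_17 {n pP qP : ℕ}
    (AP : Matrix (Fin pP) (Fin n) ℝ) (bP : Fin pP → ℝ)
    (BP : Matrix (Fin qP) (Fin n) ℝ) (dP : Fin qP → ℝ)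
    (P : Set (Fin n → ℝ)) (hP : P = polySet AP bP BP dP)
    (hPpt : PointedSet P)
    (g : Fin n → ℝ) (hg : g ≠ 0) :
    IsEdgeDirection P g ↔
      (∀ (m pQ qQ : ℕ)
        (AQ : Matrix (Fin pQ) (Fin m) ℝ) (bQ : Fin pQ → ℝ)
        (BQ : Matrix (Fin qQ) (Fin m) ℝ) (dQ : Fin qQ → ℝ)
        (Q : Set (Fin m → ℝ)) (π : (Fin m → ℝ) →ₗ[ℝ] (Fin n → ℝ)),
        PointedSet Q → Irredundant AQ bQ BQ dQ Q → (fun x => π x) '' Q = P →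
        g ∈ (fun x => π x) '' circuits AQ BQ) := by
  subst hP
  exact stmt_17_general AP bP BP dP hg
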